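/- arXiv:math/0701439 — 10 statements merged into one kernel-verified Lean document; each statement's English description precedes it below -/
import Mathlib

section
/- Let n ≥ 2, 1 ≤ k ≤ n, 1 < p < ∞ and 0 < r < R. Let v be a continuously differentiable p-harmonic function on D_{r,∞} such that M(t) is finite for every t ≥ r and M(R) > M(r). If ∫_{D_{r,∞}} |v_{r,R}(x) − u(x)|² (|∇v_{r,R}(x)|^{|p−2|} + |∇u(x)|^{|p−2|}) dm(x) < ∞, then for all t ∈ (r, R) one has M(t) ≤ (M(R) − M(r))·u₀(t) + M(r). -/
open MeasureTheory Filter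
open scoped RealInnerProductSpace

/-- `d_k(x) = (∑_{i<k} x_i²)^{1/2}`. -/
noncomputable def dk (n k : ℕ) (x : EuclideanSpace ℝ (Fin n)) : ℝ :=
  Real.sqrt (∑ i ∈ Finset.univ.filter (fun i : Fin n => (i : ℕ) < k), x i ^ 2)

/-- The `k`-sphere `Σ_k(t) = {x : d_k(x) = t}`. -/
def SigmaK (n k : ℕ) (t : ℝ) : Set (EuclideanSpace ℝ (Fin n)) := {x | dk n k x = t}

/-- The domain `D_{r,∞} = {x : d_k(x) > r}`. -/
def DInf (n k : ℕ) (r : ℝ) : Set (EuclideanSpace ℝ (Fin n)) := {x | r < dk n k x}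

/-- `M(t)`: for `t = r` the limsup of `v(z)` as `z → Σ_k(r)` within `D_{r,∞}`,
and for `t ≠ r` the supremum of `v` over `Σ_k(t)`. -/
noncomputable def Mfun (n k : ℕ) (r : ℝ) (v : EuclideanSpace ℝ (Fin n) → ℝ) (t : ℝ) : ℝ :=
  if t = r then limsup v ((nhdsSet (SigmaK n k r)) ⊓ Filter.principal (DInf n k r))
  else sSup (v '' SigmaK n k t)

/-- `u₀(t) = ξ(r,t)/ξ(r,R)` with `ξ(r,t) = ∫_r^t s^{(1-k)/(p-1)} ds`. -/
noncomputable def u0 (k : ℕ) (p r R t : ℝ) : ℝ :=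
  (∫ s in r..t, s ^ ((1 - (k : ℝ)) / (p - 1))) / ∫ s in r..R, s ^ ((1 - (k : ℝ)) / (p - 1))

/-- The comparison function `u(x) = u₀(d_k(x))`. -/
noncomputable def uComp (n k : ℕ) (p r R : ℝ) (x : EuclideanSpace ℝ (Fin n)) : ℝ :=
  u0 k p r R (dk n k x)

/-- The normalized function `v_{r,R}(x) = (v(x) - M(r))/(M(R) - M(r))`. -/
noncomputable def vrR (n k : ℕ) (r R : ℝ) (v : EuclideanSpace ℝ (Fin n) → ℝ)
    (x : EuclideanSpace ℝ (Fin n)) : ℝ :=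
  (v x - Mfun n k r v r) / (Mfun n k r v R - Mfun n k r v r)

/-- The integrand `|v_{r,R} - u|² (|∇v_{r,R}|^{|p-2|} + |∇u|^{|p-2|})`. -/
noncomputable def Gfun (n k : ℕ) (p r R : ℝ) (v : EuclideanSpace ℝ (Fin n) → ℝ)
    (x : EuclideanSpace ℝ (Fin n)) : ℝ :=
  |vrR n k r R v x - uComp n k p r R x| ^ 2 *
    (‖gradient (vrR n k r R v) x‖ ^ |p - 2| + ‖gradient (uComp n k p r R) x‖ ^ |p - 2|)

/-- `v` is a weak solution of the `p`-Laplace equation on `Ω`. -/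
def IsPHarmonic (n : ℕ) (p : ℝ) (Ω : Set (EuclideanSpace ℝ (Fin n)))
    (v : EuclideanSpace ℝ (Fin n) → ℝ) : Prop :=
  ∀ φ : EuclideanSpace ℝ (Fin n) → ℝ, ContDiff ℝ (⊤ : ℕ∞) φ → HasCompactSupport φ →
    tsupport φ ⊆ Ω →
    ∫ x in Ω, ‖gradient v x‖ ^ (p - 2) * ⟪gradient v x, gradient φ x⟫ = 0

/-!
Put `F(a) = |a|^{p-2} a` and let `V` be the normalized function. On the shell `r < d_k < R` the
field `X = F(∇V) - F(∇u)` is weakly divergence free, because `u` is `p`-harmonic: up to a constant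
factor `F(∇u)` is `|Px|^{-k} Px` with `P` the projection onto the first `k` coordinates.
Monotonicity of `F` gives `⟪X, ∇(V - u)⟫ ≥ 0`, and since `|∇u|` is bounded below on the shell,
`|X|² ≤ C (|∇V|^{|p-2|} + |∇u|^{|p-2|}) ⟪X, ∇(V - u)⟫`. Let `G` be a smoothed positive part of
`V - u - ε`, extended by zero; it vanishes near the boundary of the shell. Testing the equation with
`θ² G`, for cutoffs `θ` with small gradient, yields the Caccioppoli estimate
`∫ θ² ⟪X, ∇G⟫ ≤ C sup |∇θ|² ∫ |V - u|² (|∇V|^{|p-2|} + |∇u|^{|p-2|})`, whose right side tends to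
zero. Hence `∇G = 0`, so `G = 0`, that is, `V ≤ u + ε`.
-/

section Flux

variable {E : Type*} [NormedAddCommGroup E] [InnerProductSpace ℝ E] {p : ℝ}

/-- The vector field `a ↦ |a|^{p-2} a`, so that the `p`-Laplace equation is
`div (pFlux p (∇v)) = 0`. Also for `p < 2` its value at `0` is `0`. -/
noncomputable def pFlux (p : ℝ) (a : E) : E := ‖a‖ ^ (p - 2) • a

@[simp]
lemma pFlux_zero : pFlux p (0 : E) = 0 := smul_zero _

lemma pFlux_smul {c : ℝ} (hc : 0 < c) (a : E) : pFlux p (c • a) = c ^ (p - 1) • pFlux p a := by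
  have hpow : c ^ (p - 2) * c = c ^ (p - 1) := by
    rw [← Real.rpow_add_one hc.ne']
    ring_nf
  rw [pFlux, pFlux, norm_smul, Real.norm_of_nonneg hc.le, Real.mul_rpow hc.le (norm_nonneg a),
    smul_smul, smul_smul, ← hpow]
  ring_nf

lemma pFlux_of_norm_eq_one {a : E} (ha : ‖a‖ = 1) : pFlux p a = a := by
  rw [pFlux, ha, Real.one_rpow, one_smul]

lemma norm_pFlux (hp : 1 < p) (a : E) : ‖pFlux p a‖ = ‖a‖ ^ (p - 1) := by
  rcases eq_or_ne a 0 with rfl | ha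
  · rw [pFlux_zero, norm_zero, Real.zero_rpow (by linarith)]
  · rw [pFlux, norm_smul, Real.norm_of_nonneg (by positivity),
      ← Real.rpow_add_one (norm_ne_zero_iff.2 ha)]
    ring_nf

lemma continuous_pFlux (hp : 1 < p) : Continuous (pFlux p : E → E) := by
  refine continuous_iff_continuousAt.2 fun a => ?_
  rcases eq_or_ne a 0 with rfl | ha
  · rw [ContinuousAt, pFlux_zero, tendsto_zero_iff_norm_tendsto_zero]
    simp_rw [norm_pFlux hp]
    have hcont : Continuous fun a : E => ‖a‖ ^ (p - 1) :=
      continuous_norm.rpow_const fun _ => Or.inr (by linarith)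
    simpa [Real.zero_rpow (by linarith : p - 1 ≠ 0)] using hcont.tendsto 0
  · exact (continuous_norm.continuousAt.rpow_const (Or.inl (norm_ne_zero_iff.2 ha))).smul
      continuousAt_id

lemma pFlux_injective (hp : 1 < p) : Function.Injective (pFlux p : E → E) := by
  intro a b hab
  have hnorm : ‖a‖ = ‖b‖ := by
    have := congrArg norm hab
    rw [norm_pFlux hp, norm_pFlux hp] at this
    exact (Real.rpow_left_inj (norm_nonneg a) (norm_nonneg b) (by linarith)).1 this
  rcases eq_or_ne a 0 with rfl | ha
  · exact (norm_eq_zero.1 (hnorm.symm.trans norm_zero)).symm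
  · rw [pFlux, pFlux, ← hnorm] at hab
    exact smul_right_injective E (Real.rpow_pos_of_pos (norm_pos_iff.2 ha) _).ne' hab

lemma norm_rpow_smul_pFlux (a : E) : ‖a‖ ^ (2 - p) • pFlux p a = a := by
  rcases eq_or_ne a 0 with rfl | ha
  · rw [pFlux_zero, smul_zero]
  · rw [pFlux, smul_smul, ← Real.rpow_add (norm_pos_iff.2 ha), sub_add_sub_cancel, sub_self,
      Real.rpow_zero, one_smul]

lemma half_add_mul_norm_sub_sq_le {s t : ℝ} {a b : E}
    (h : 0 ≤ (s - t) * (‖a‖ ^ 2 - ‖b‖ ^ 2)) :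
    (s + t) / 2 * ‖a - b‖ ^ 2 ≤ ⟪s • a - t • b, a - b⟫ := by
  have expand : ⟪s • a - t • b, a - b⟫ =
      (s + t) / 2 * ‖a - b‖ ^ 2 + (s - t) * (‖a‖ ^ 2 - ‖b‖ ^ 2) / 2 := by
    simp only [← real_inner_self_eq_norm_sq, inner_sub_left, inner_sub_right,
      real_inner_smul_left, real_inner_comm a b]
    ring
  linarith

lemma rpow_sub_rpow_mul_rpow_sub_rpow_nonneg {x y s t : ℝ} (hx : 0 ≤ x) (hy : 0 ≤ y)
    (hs : 0 ≤ s) (ht : 0 ≤ t) : 0 ≤ (x ^ s - y ^ s) * (x ^ t - y ^ t) := by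
  rcases le_total x y with hxy | hyx
  · exact mul_nonneg_of_nonpos_of_nonpos (sub_nonpos.2 (Real.rpow_le_rpow hx hxy hs))
      (sub_nonpos.2 (Real.rpow_le_rpow hx hxy ht))
  · exact mul_nonneg (sub_nonneg.2 (Real.rpow_le_rpow hy hyx hs))
      (sub_nonneg.2 (Real.rpow_le_rpow hy hyx ht))

lemma add_rpow_mul_norm_sub_sq_le_inner_pFlux_sub (hp : 2 ≤ p) (a b : E) :
    (‖a‖ ^ (p - 2) + ‖b‖ ^ (p - 2)) / 2 * ‖a - b‖ ^ 2 ≤ ⟪pFlux p a - pFlux p b, a - b⟫ := by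
  refine half_add_mul_norm_sub_sq_le ?_
  simpa using rpow_sub_rpow_mul_rpow_sub_rpow_nonneg (norm_nonneg a) (norm_nonneg b)
    (sub_nonneg.2 hp) zero_le_two

-- The inverse of `pFlux p` is again a flux, so the roles of `a` and `pFlux p a` are exchanged.
lemma add_rpow_mul_norm_pFlux_sub_sq_le_inner (hp : 1 < p) (hp2 : p ≤ 2) (a b : E) :
    (‖a‖ ^ (2 - p) + ‖b‖ ^ (2 - p)) / 2 * ‖pFlux p a - pFlux p b‖ ^ 2 ≤
      ⟪pFlux p a - pFlux p b, a - b⟫ := by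
  have hsign : 0 ≤ (‖a‖ ^ (2 - p) - ‖b‖ ^ (2 - p)) * (‖pFlux p a‖ ^ 2 - ‖pFlux p b‖ ^ 2) := by
    rw [norm_pFlux hp, norm_pFlux hp, ← Real.rpow_mul_natCast (norm_nonneg a),
      ← Real.rpow_mul_natCast (norm_nonneg b)]
    exact rpow_sub_rpow_mul_rpow_sub_rpow_nonneg (norm_nonneg a) (norm_nonneg b)
      (sub_nonneg.2 hp2) (mul_nonneg (by linarith) (Nat.cast_nonneg 2))
  have := half_add_mul_norm_sub_sq_le hsign
  rwa [norm_rpow_smul_pFlux, norm_rpow_smul_pFlux, real_inner_comm] at this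

lemma inner_pFlux_sub_nonneg (hp : 1 < p) (a b : E) :
    0 ≤ ⟪pFlux p a - pFlux p b, a - b⟫ := by
  rcases le_total 2 p with h2 | h2
  · exact le_trans (by positivity) <| add_rpow_mul_norm_sub_sq_le_inner_pFlux_sub h2 a b
  · exact le_trans (by positivity) <| add_rpow_mul_norm_pFlux_sub_sq_le_inner hp h2 a b

lemma rpow_sub_rpow_mul_le {q s t : ℝ} (hq : 0 ≤ q) (ht : 0 ≤ t) (hts : t ≤ s) :
    (s ^ q - t ^ q) * t ≤ q * s ^ q * (s - t) := by
  rcases ht.eq_or_lt with rfl | ht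
  · rw [mul_zero, sub_zero]
    positivity
  have hs : 0 < s := ht.trans_le hts
  have bernoulli : 1 + (q + 1) * (t / s - 1) ≤ t ^ q * t / (s ^ q * s) := by
    have := one_add_mul_self_le_rpow_one_add (s := t / s - 1)
      (by linarith [div_pos ht hs]) (p := q + 1) (by linarith)
    rwa [add_sub_cancel, Real.div_rpow ht.le hs.le, Real.rpow_add_one ht.ne',
      Real.rpow_add_one hs.ne'] at this
  rw [le_div_iff₀ (by positivity)] at bernoulli
  have clear_denominator : (1 + (q + 1) * (t / s - 1)) * (s ^ q * s) =
      s ^ q * t - q * s ^ q * (s - t) := by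
    field_simp
    ring
  linarith

lemma norm_pFlux_sub_le (hp : 2 ≤ p) (a b : E) :
    ‖pFlux p a - pFlux p b‖ ≤ (p - 1) * (‖a‖ ^ (p - 2) + ‖b‖ ^ (p - 2)) * ‖a - b‖ := by
  wlog hba : ‖b‖ ≤ ‖a‖ generalizing a b
  · simpa only [norm_sub_rev, add_comm] using this b a (le_of_not_ge hba)
  have hp2 : 0 ≤ p - 2 := sub_nonneg.2 hp
  have hmono : ‖b‖ ^ (p - 2) ≤ ‖a‖ ^ (p - 2) := Real.rpow_le_rpow (norm_nonneg b) hba hp2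
  have hsplit : pFlux p a - pFlux p b =
      ‖a‖ ^ (p - 2) • (a - b) + (‖a‖ ^ (p - 2) - ‖b‖ ^ (p - 2)) • b := by
    simp only [pFlux, smul_sub, sub_smul]
    abel
  calc ‖pFlux p a - pFlux p b‖
      ≤ ‖a‖ ^ (p - 2) * ‖a - b‖ + (‖a‖ ^ (p - 2) - ‖b‖ ^ (p - 2)) * ‖b‖ := by
        rw [hsplit]
        refine (norm_add_le _ _).trans_eq ?_
        rw [norm_smul, norm_smul, Real.norm_of_nonneg (by positivity),
          Real.norm_of_nonneg (sub_nonneg.2 hmono)]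
    _ ≤ ‖a‖ ^ (p - 2) * ‖a - b‖ + (p - 2) * ‖a‖ ^ (p - 2) * (‖a‖ - ‖b‖) := by
        exact add_le_add le_rfl (rpow_sub_rpow_mul_le hp2 (norm_nonneg b) hba)
    _ ≤ ‖a‖ ^ (p - 2) * ‖a - b‖ + (p - 2) * ‖a‖ ^ (p - 2) * ‖a - b‖ := by
        gcongr
        exact norm_sub_norm_le a b
    _ = (p - 1) * (‖a‖ ^ (p - 2) + 0) * ‖a - b‖ := by ring
    _ ≤ (p - 1) * (‖a‖ ^ (p - 2) + ‖b‖ ^ (p - 2)) * ‖a - b‖ := by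
        gcongr
        · linarith
        · positivity

lemma norm_pFlux_sub_sq_le_of_two_le (hp : 2 ≤ p) (a b : E) :
    ‖pFlux p a - pFlux p b‖ ^ 2 ≤ 2 * (p - 1) ^ 2 * (‖a‖ ^ (p - 2) + ‖b‖ ^ (p - 2)) *
      ⟪pFlux p a - pFlux p b, a - b⟫ := by
  set ω := ‖a‖ ^ (p - 2) + ‖b‖ ^ (p - 2)
  calc ‖pFlux p a - pFlux p b‖ ^ 2 ≤ ((p - 1) * ω * ‖a - b‖) ^ 2 :=
        pow_le_pow_left₀ (norm_nonneg _) (norm_pFlux_sub_le hp a b) 2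
    _ = 2 * (p - 1) ^ 2 * ω * (ω / 2 * ‖a - b‖ ^ 2) := by ring
    _ ≤ 2 * (p - 1) ^ 2 * ω * ⟪pFlux p a - pFlux p b, a - b⟫ := by
        gcongr
        exact add_rpow_mul_norm_sub_sq_le_inner_pFlux_sub hp a b

-- For `p < 2` the two sides scale differently, hence the lower bound on `‖b‖`.
lemma norm_pFlux_sub_sq_le_of_le_two (hp : 1 < p) (hp2 : p ≤ 2) {β : ℝ} (hβ : 0 < β) (a : E)
    {b : E} (hb : β ≤ ‖b‖) :
    ‖pFlux p a - pFlux p b‖ ^ 2 ≤ 2 / (β ^ (2 - p)) ^ 2 * (‖a‖ ^ (2 - p) + ‖b‖ ^ (2 - p)) *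
      ⟪pFlux p a - pFlux p b, a - b⟫ := by
  have hβω : β ^ (2 - p) ≤ ‖a‖ ^ (2 - p) + ‖b‖ ^ (2 - p) :=
    (Real.rpow_le_rpow hβ.le hb (sub_nonneg.2 hp2)).trans (le_add_of_nonneg_left (by positivity))
  set ω := ‖a‖ ^ (2 - p) + ‖b‖ ^ (2 - p)
  rw [div_mul_eq_mul_div, div_mul_eq_mul_div, le_div_iff₀ (by positivity)]
  calc ‖pFlux p a - pFlux p b‖ ^ 2 * (β ^ (2 - p)) ^ 2
      ≤ ‖pFlux p a - pFlux p b‖ ^ 2 * ω ^ 2 := by gcongr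
    _ = 2 * ω * (ω / 2 * ‖pFlux p a - pFlux p b‖ ^ 2) := by ring
    _ ≤ 2 * ω * ⟪pFlux p a - pFlux p b, a - b⟫ := by
        gcongr
        exact add_rpow_mul_norm_pFlux_sub_sq_le_inner hp hp2 a b

lemma exists_norm_pFlux_sub_sq_le (hp : 1 < p) {β : ℝ} (hβ : 0 < β) :
    ∃ C, 0 ≤ C ∧ ∀ a b : E, β ≤ ‖b‖ → ‖pFlux p a - pFlux p b‖ ^ 2 ≤
      C * (‖a‖ ^ |p - 2| + ‖b‖ ^ |p - 2|) * ⟪pFlux p a - pFlux p b, a - b⟫ := by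
  rcases le_total 2 p with h2 | h2
  · rw [abs_of_nonneg (sub_nonneg.2 h2)]
    exact ⟨_, by positivity, fun a b _ => norm_pFlux_sub_sq_le_of_two_le h2 a b⟩
  · rw [abs_of_nonpos (sub_nonpos.2 h2), neg_sub]
    exact ⟨_, by positivity, fun a _ hb => norm_pFlux_sub_sq_le_of_le_two hp h2 hβ a hb⟩

end Flux

section Gradient

variable {E : Type*} [NormedAddCommGroup E] [InnerProductSpace ℝ E] [CompleteSpace E]
  {φ : E → ℝ} {Ω : Set E}

lemma gradient_eq_zero_of_notMem_tsupport {x : E} (hx : x ∉ tsupport φ) : gradient φ x = 0 := by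
  rw [gradient, fderiv_of_notMem_tsupport ℝ hx, map_zero]

lemma continuousOn_gradient_of_contDiffOn (hΩ : IsOpen Ω) (hφ : ContDiffOn ℝ 1 φ Ω) :
    ContinuousOn (gradient φ) Ω :=
  (InnerProductSpace.toDual ℝ E).symm.continuous.comp_continuousOn
    (hφ.continuousOn_fderiv_of_isOpen hΩ le_rfl)

lemma continuous_gradient_of_contDiff (hφ : ContDiff ℝ 1 φ) : Continuous (gradient φ) :=
  (InnerProductSpace.toDual ℝ E).symm.continuous.comp (hφ.continuous_fderiv one_ne_zero)

lemma gradient_eq_of_eventuallyEq {ψ : E → ℝ} {x : E} (h : φ =ᶠ[nhds x] ψ) :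
    gradient φ x = gradient ψ x := by
  rw [gradient, gradient, h.fderiv_eq]

lemma hasGradientAt_comp {g : ℝ → ℝ} {φ' x : E} {g' : ℝ} (hg : HasDerivAt g g' (φ x))
    (hφ : HasGradientAt φ φ' x) : HasGradientAt (fun y => g (φ y)) (g' • φ') x := by
  rw [hasGradientAt_iff_hasFDerivAt, map_smul]
  exact hg.comp_hasFDerivAt x hφ.hasFDerivAt

lemma gradient_sub_const_div_const {x : E} (hx : DifferentiableAt ℝ φ x)
    (m a : ℝ) : gradient (fun y => (φ y - m) / a) x = a⁻¹ • gradient φ x := by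
  have hg : HasDerivAt (fun s : ℝ => (s - m) / a) a⁻¹ (φ x) := by
    simpa only [one_div, id] using ((hasDerivAt_id (φ x)).sub_const m).div_const a
  exact (hasGradientAt_comp hg hx.hasGradientAt).gradient

lemma tsupport_inner_gradient_subset (F : E → E) (φ : E → ℝ) :
    tsupport (fun x => ⟪F x, gradient φ x⟫) ⊆ tsupport φ := by
  refine closure_minimal (fun x hx => ?_) (isClosed_tsupport φ)
  contrapose! hx
  rw [Function.notMem_support, gradient_eq_zero_of_notMem_tsupport hx, inner_zero_right]

end Gradient

section WeakDivergence

lemma continuous_of_continuousOn_of_tsupport_subset {α β : Type*} [TopologicalSpace α]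
    [TopologicalSpace β] [Zero β] {f : α → β} {Ω : Set α} (hΩ : IsOpen Ω)
    (hf : ContinuousOn f Ω) (hs : tsupport f ⊆ Ω) : Continuous f :=
  continuous_of_tsupport fun _ hx => hf.continuousAt (hΩ.mem_nhds (hs hx))

variable {E : Type*} [NormedAddCommGroup E] [InnerProductSpace ℝ E] [FiniteDimensional ℝ E]
  [MeasurableSpace E] [BorelSpace E] {F : E → E} {φ : E → ℝ} {Ω Ω' : Set E}

lemma integrable_of_continuousOn_of_tsupport_subset {f : E → ℝ} {K : Set E} (hΩ : IsOpen Ω)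
    (hf : ContinuousOn f Ω) (hK : IsCompact K) (hfK : tsupport f ⊆ K) (hKΩ : K ⊆ Ω) :
    Integrable f :=
  (continuous_of_continuousOn_of_tsupport_subset hΩ hf
    (hfK.trans hKΩ)).integrable_of_hasCompactSupport
    (hK.of_isClosed_subset (isClosed_tsupport f) hfK)

lemma integrable_inner_gradient (hΩ : IsOpen Ω) (hF : ContinuousOn F Ω) (hφ : ContDiff ℝ 1 φ)
    (hc : HasCompactSupport φ) (hs : tsupport φ ⊆ Ω) :
    Integrable fun x => ⟪F x, gradient φ x⟫ :=
  integrable_of_continuousOn_of_tsupport_subset hΩ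
    (hF.inner (𝕜 := ℝ) (continuous_gradient_of_contDiff hφ).continuousOn) hc.isCompact
    (tsupport_inner_gradient_subset F φ) hs

/-- `div F = 0` on `Ω` in the sense of distributions. The integral runs over the whole space;
outside `Ω` the values of `F` do not matter because there the gradients of the test functions
vanish. -/
def IsWeaklyDivFree (F : E → E) (Ω : Set E) : Prop :=
  ∀ φ : E → ℝ, ContDiff ℝ (⊤ : ℕ∞) φ → HasCompactSupport φ → tsupport φ ⊆ Ω →
    ∫ x, ⟪F x, gradient φ x⟫ = 0

lemma IsWeaklyDivFree.mono (h : IsWeaklyDivFree F Ω) (hΩ : Ω' ⊆ Ω) : IsWeaklyDivFree F Ω' :=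
  fun φ hφ hc hs => h φ hφ hc (hs.trans hΩ)

lemma IsWeaklyDivFree.congr {F' : E → E} (h : IsWeaklyDivFree F Ω) (hF : Set.EqOn F F' Ω) :
    IsWeaklyDivFree F' Ω := by
  intro φ hφ hc hs
  rw [← h φ hφ hc hs]
  refine integral_congr_ae (ae_of_all _ fun x => ?_)
  by_cases hx : x ∈ tsupport φ
  · simp only [hF (hs hx)]
  · simp only [gradient_eq_zero_of_notMem_tsupport hx, inner_zero_right]

lemma IsWeaklyDivFree.const_smul (h : IsWeaklyDivFree F Ω) (c : ℝ) :
    IsWeaklyDivFree (fun x => c • F x) Ω := by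
  intro φ hφ hc hs
  simp_rw [real_inner_smul_left]
  rw [integral_const_mul, h φ hφ hc hs, mul_zero]

lemma IsWeaklyDivFree.sub {F' : E → E} (h : IsWeaklyDivFree F Ω) (h' : IsWeaklyDivFree F' Ω)
    (hΩ : IsOpen Ω) (hF : ContinuousOn F Ω) (hF' : ContinuousOn F' Ω) :
    IsWeaklyDivFree (fun x => F x - F' x) Ω := by
  intro φ hφ hc hs
  have hφ1 : ContDiff ℝ 1 φ := hφ.of_le (by exact_mod_cast le_top)
  simp_rw [inner_sub_left]
  rw [integral_sub (integrable_inner_gradient hΩ hF hφ1 hc hs)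
    (integrable_inner_gradient hΩ hF' hφ1 hc hs), h φ hφ hc hs, h' φ hφ hc hs, sub_zero]

lemma exists_contDiff_dist_gradient_le (hφ : ContDiff ℝ 1 φ) (hc : HasCompactSupport φ)
    {δ ε : ℝ} (hδ : 0 < δ) (hε : 0 < ε) :
    ∃ ψ : E → ℝ, ContDiff ℝ (⊤ : ℕ∞) ψ ∧ tsupport ψ ⊆ Metric.cthickening δ (tsupport φ) ∧
      ∀ x, dist (gradient ψ x) (gradient φ x) ≤ ε := by
  have hφ' : Continuous (fderiv ℝ φ) := hφ.continuous_fderiv one_ne_zero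
  obtain ⟨δ', hδ', hδε⟩ := Metric.uniformContinuous_iff.1
    ((hc.fderiv ℝ).uniformContinuous_of_continuous hφ') ε hε
  have hη : 0 < min δ δ' := lt_min hδ hδ'
  let ρ : ContDiffBump (0 : E) := ⟨min δ δ' / 2, min δ δ', half_pos hη, half_lt_self hη⟩
  refine ⟨convolution (ρ.normed volume) φ (ContinuousLinearMap.lsmul ℝ ℝ) volume,
    ρ.hasCompactSupport_normed.contDiff_convolution_left _ ρ.contDiff_normed
      hφ.continuous.locallyIntegrable, ?_, fun x => ?_⟩
  · refine closure_minimal ?_ Metric.isClosed_cthickening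
    intro x hx
    obtain ⟨y, hy, z, hz, rfl⟩ := support_convolution_subset _ hx
    rw [ρ.support_normed_eq, mem_ball_zero_iff] at hy
    refine Metric.mem_cthickening_of_dist_le _ z δ _ (subset_tsupport _ hz) ?_
    rw [dist_add_self_left]
    exact hy.le.trans (min_le_left _ _)
  · have derivative_of_convolution := (hc.hasFDerivAt_convolution_right (μ := volume)
      (ContinuousLinearMap.lsmul ℝ ℝ)
      (ρ.continuous_normed (μ := volume)).locallyIntegrable hφ x).fderiv
    rw [gradient, gradient, LinearIsometryEquiv.dist_map, derivative_of_convolution]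
    exact ρ.dist_normed_convolution_le hφ'.aestronglyMeasurable
      fun y hy => (hδε ((Metric.mem_ball.1 hy).trans_le (min_le_right _ _))).le

lemma IsWeaklyDivFree.integral_inner_gradient_eq_zero (h : IsWeaklyDivFree F Ω)
    (hΩ : IsOpen Ω) (hF : ContinuousOn F Ω) (hφ : ContDiff ℝ 1 φ) (hc : HasCompactSupport φ)
    (hs : tsupport φ ⊆ Ω) : ∫ x, ⟪F x, gradient φ x⟫ = 0 := by
  obtain ⟨δ, hδ, hδΩ⟩ := hc.isCompact.exists_cthickening_subset_open hΩ hs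
  set K := Metric.cthickening δ (tsupport φ)
  have hK : IsCompact K := hc.isCompact.cthickening
  have hφK : tsupport φ ⊆ K := Metric.self_subset_cthickening _
  have hFK : IntegrableOn (fun x => ‖F x‖) K := (hF.mono hδΩ).norm.integrableOn_compact hK
  have small : ∀ ε > 0, ‖∫ x, ⟪F x, gradient φ x⟫‖ ≤ ε * ∫ x in K, ‖F x‖ := by
    intro ε hε
    obtain ⟨ψ, hψ, hψK, hψφ⟩ := exists_contDiff_dist_gradient_le hφ hc hδ hε
    have hψc : HasCompactSupport ψ := hK.of_isClosed_subset (isClosed_tsupport ψ) hψK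
    have difference : ∫ x, ⟪F x, gradient φ x⟫ =
        ∫ x in K, ⟪F x, gradient φ x - gradient ψ x⟫ := by
      rw [← sub_zero (∫ x, ⟪F x, gradient φ x⟫), ← h ψ hψ hψc (hψK.trans hδΩ),
        ← integral_sub (integrable_inner_gradient hΩ hF hφ hc hs)
          (integrable_inner_gradient hΩ hF (hψ.of_le (by exact_mod_cast le_top)) hψc
            (hψK.trans hδΩ))]
      simp_rw [← inner_sub_right]
      refine (setIntegral_eq_integral_of_forall_compl_eq_zero fun x hx => ?_).symm
      rw [gradient_eq_zero_of_notMem_tsupport fun hx' => hx (hφK hx'),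
        gradient_eq_zero_of_notMem_tsupport fun hx' => hx (hψK hx'), sub_zero, inner_zero_right]
    rw [difference, ← integral_const_mul]
    refine norm_integral_le_of_norm_le (hFK.const_mul ε) (ae_of_all _ fun x => ?_)
    calc ‖⟪F x, gradient φ x - gradient ψ x⟫‖
        ≤ ‖F x‖ * dist (gradient ψ x) (gradient φ x) := by
          rw [dist_comm, dist_eq_norm]
          exact norm_inner_le_norm _ _
      _ ≤ ‖F x‖ * ε := mul_le_mul_of_nonneg_left (hψφ x) (norm_nonneg _)
      _ = ε * ‖F x‖ := mul_comm _ _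
  have hlim : Tendsto (fun ε : ℝ => ε * ∫ x in K, ‖F x‖) (nhdsWithin 0 (Set.Ioi 0)) (nhds 0) :=
    tendsto_nhdsWithin_of_tendsto_nhds (by
      simpa using (continuous_mul_const (∫ x in K, ‖F x‖)).tendsto 0)
  exact norm_le_zero_iff.1 (ge_of_tendsto hlim (eventually_mem_nhdsWithin.mono small))

lemma integral_mul_fderiv_eq_neg_fderiv_mul_of_tsupport_subset {f : E → ℝ} (hΩ : IsOpen Ω)
    (hf : ContDiffOn ℝ 1 f Ω) (hφ : ContDiff ℝ 1 φ) (hc : HasCompactSupport φ)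
    (hs : tsupport φ ⊆ Ω) (e : E) :
    Integrable (fun x => f x * fderiv ℝ φ x e) ∧ Integrable (fun x => fderiv ℝ f x e * φ x) ∧
      ∫ x, f x * fderiv ℝ φ x e = -∫ x, fderiv ℝ f x e * φ x := by
  have hφ' : Continuous fun x => fderiv ℝ φ x e :=
    (hφ.continuous_fderiv one_ne_zero).clm_apply continuous_const
  have hf' : ContinuousOn (fun x => fderiv ℝ f x e) Ω :=
    (hf.continuousOn_fderiv_of_isOpen hΩ le_rfl).clm_apply continuousOn_const
  have hfφ' : Integrable fun x => f x * fderiv ℝ φ x e :=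
    integrable_of_continuousOn_of_tsupport_subset hΩ (hf.continuousOn.mul hφ'.continuousOn)
      hc.isCompact (tsupport_mul_subset_right.trans (tsupport_fderiv_apply_subset ℝ e)) hs
  have hf'φ : Integrable fun x => fderiv ℝ f x e * φ x :=
    integrable_of_continuousOn_of_tsupport_subset hΩ (hf'.mul hφ.continuous.continuousOn)
      hc.isCompact tsupport_mul_subset_right hs
  have hfφ : Integrable fun x => f x * φ x :=
    integrable_of_continuousOn_of_tsupport_subset hΩ
      (hf.continuousOn.mul hφ.continuous.continuousOn) hc.isCompact tsupport_mul_subset_right hs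
  exact ⟨hfφ', hf'φ, integral_mul_fderiv_eq_neg_fderiv_mul_of_integrable hf'φ hfφ' hfφ
    (fun x hx => (hf.differentiableOn one_ne_zero).differentiableAt (hΩ.mem_nhds (hs hx)))
    fun x _ => hφ.differentiable one_ne_zero x⟩

lemma isWeaklyDivFree_of_trace_fderiv_eq_zero (hΩ : IsOpen Ω) (hF : ContDiffOn ℝ 1 F Ω)
    (hdiv : ∀ x ∈ Ω, LinearMap.trace ℝ E (fderiv ℝ F x) = 0) : IsWeaklyDivFree F Ω := by
  intro φ hφ hc hs
  let b := stdOrthonormalBasis ℝ E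
  have byParts := fun i => integral_mul_fderiv_eq_neg_fderiv_mul_of_tsupport_subset hΩ
    (contDiffOn_const.inner ℝ hF : ContDiffOn ℝ 1 (fun x => ⟪b i, F x⟫) Ω)
    (hφ.of_le (by exact_mod_cast le_top)) hc hs (b i)
  have coordinates : ∀ x, ⟪F x, gradient φ x⟫ = ∑ i, ⟪b i, F x⟫ * fderiv ℝ φ x (b i) := by
    intro x
    rw [← b.sum_inner_mul_inner]
    simp only [real_inner_comm, inner_gradient_left]
  have divergence : ∀ x ∈ Ω, ∑ i, fderiv ℝ (fun y => ⟪b i, F y⟫) x (b i) = 0 := by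
    intro x hx
    have hFx : DifferentiableAt ℝ F x :=
      (hF.differentiableOn one_ne_zero).differentiableAt (hΩ.mem_nhds hx)
    rw [← hdiv x hx, LinearMap.trace_eq_sum_inner _ b]
    refine Finset.sum_congr rfl fun i _ => ?_
    rw [fderiv_inner_apply ℝ (differentiableAt_const _) hFx]
    simp
  simp_rw [coordinates]
  rw [integral_finsetSum _ fun i _ => (byParts i).1]
  simp_rw [fun i => (byParts i).2.2]
  rw [Finset.sum_neg_distrib, ← integral_finsetSum _ fun i _ => (byParts i).2.1, neg_eq_zero]
  refine integral_eq_zero_of_ae (ae_of_all _ fun x => ?_)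
  simp only [← Finset.sum_mul, Pi.zero_apply]
  by_cases hx : x ∈ tsupport φ
  · rw [divergence x (hs hx), zero_mul]
  · rw [image_eq_zero_of_notMem_tsupport hx, mul_zero]

end WeakDivergence

section Liouville

variable {E : Type*} [NormedAddCommGroup E] [InnerProductSpace ℝ E] [FiniteDimensional ℝ E]
  {F : E → E} {G J θ : E → ℝ} {Ω : Set E} {δ : ℝ}

lemma gradient_sq_mul {x : E} (hθ : DifferentiableAt ℝ θ x) (hG : DifferentiableAt ℝ G x) :
    gradient (fun y => θ y ^ 2 * G y) x =
      θ x ^ 2 • gradient G x + (2 * (G x * θ x)) • gradient θ x := by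
  rw [gradient, fderiv_fun_mul (hθ.fun_pow 2) hG, fderiv_fun_pow 2 hθ]
  simp only [map_add, map_smul, smul_smul, gradient]
  congr 2
  simp only [Nat.add_one_sub_one, pow_one, nsmul_eq_mul, Nat.cast_ofNat]
  ring

-- Cauchy–Schwarz and Young: the cross term `4 (θ G ⟪a, ∇θ⟫)` is absorbed in `θ² ⟪a, ∇G⟫`.
lemma sq_mul_inner_gradient_le {x a : E} {j : ℝ} (hθ : DifferentiableAt ℝ θ x)
    (hG : DifferentiableAt ℝ G x) (hδ : ‖gradient θ x‖ ≤ δ) (hj : 0 ≤ j)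
    (haG : 0 ≤ ⟪a, gradient G x⟫) (haj : G x ^ 2 * ‖a‖ ^ 2 ≤ j * ⟪a, gradient G x⟫) :
    θ x ^ 2 * ⟪a, gradient G x⟫ ≤
      4 * δ ^ 2 * j + 2 * ⟪a, gradient (fun y => θ y ^ 2 * G y) x⟫ := by
  have cauchy_schwarz : ⟪a, gradient θ x⟫ ^ 2 ≤ ‖a‖ ^ 2 * δ ^ 2 := by
    rw [← mul_pow, ← sq_abs ⟪a, gradient θ x⟫]
    exact pow_le_pow_left₀ (abs_nonneg _)
      ((abs_real_inner_le_norm _ _).trans (mul_le_mul_of_nonneg_left hδ (norm_nonneg a))) 2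
  have cross_term : (4 * (G x * θ x * ⟪a, gradient θ x⟫)) ^ 2 ≤
      (θ x ^ 2 * ⟪a, gradient G x⟫ + 4 * δ ^ 2 * j) ^ 2 := by
    calc (4 * (G x * θ x * ⟪a, gradient θ x⟫)) ^ 2
        = 16 * θ x ^ 2 * (G x ^ 2 * ⟪a, gradient θ x⟫ ^ 2) := by ring
      _ ≤ 16 * θ x ^ 2 * (G x ^ 2 * (‖a‖ ^ 2 * δ ^ 2)) := by gcongr
      _ = 16 * θ x ^ 2 * δ ^ 2 * (G x ^ 2 * ‖a‖ ^ 2) := by ring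
      _ ≤ 16 * θ x ^ 2 * δ ^ 2 * (j * ⟪a, gradient G x⟫) := by gcongr
      _ = 4 * (θ x ^ 2 * ⟪a, gradient G x⟫) * (4 * δ ^ 2 * j) := by ring
      _ ≤ (θ x ^ 2 * ⟪a, gradient G x⟫ + 4 * δ ^ 2 * j) ^ 2 := four_mul_le_sq_add _ _
  have absorb := neg_le_of_abs_le (abs_le_of_sq_le_sq cross_term (by positivity))
  rw [gradient_sq_mul hθ hG, inner_add_right, real_inner_smul_right, real_inner_smul_right]
  linarith

lemma exists_cutoff (E : Type*) [NormedAddCommGroup E] [InnerProductSpace ℝ E]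
    [FiniteDimensional ℝ E] :
    ∃ L : ℝ, ∀ N : ℝ, 0 < N → ∃ θ : E → ℝ, ContDiff ℝ 1 θ ∧ HasCompactSupport θ ∧
      (∀ x, ‖x‖ ≤ N → θ x = 1) ∧ ∀ x, ‖gradient θ x‖ ≤ L / N := by
  let η : ContDiffBump (0 : E) := ⟨1, 2, one_pos, one_lt_two⟩
  have hη : ContDiff ℝ 1 η := η.contDiff
  obtain ⟨L, hL⟩ := (η.hasCompactSupport.fderiv ℝ).exists_bound_of_continuous
    (hη.continuous_fderiv one_ne_zero)
  refine ⟨L, fun N hN => ⟨fun x => η (N⁻¹ • x), hη.comp (contDiff_const_smul _),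
    η.hasCompactSupport.comp_smul (inv_ne_zero hN.ne'), fun x hx => ?_, fun x => ?_⟩⟩
  · refine η.one_of_mem_closedBall ?_
    rwa [mem_closedBall_zero_iff, norm_smul, norm_inv, Real.norm_of_nonneg hN.le,
      inv_mul_le_iff₀ hN, mul_one]
  · rw [gradient, LinearIsometryEquiv.norm_map, fderiv_comp_smul, norm_smul, norm_inv,
      Real.norm_of_nonneg hN.le, div_eq_inv_mul]
    exact mul_le_mul_of_nonneg_left (hL _) (inv_nonneg.2 hN.le)

variable [MeasurableSpace E] [BorelSpace E]

lemma integrable_sq_mul_inner_gradient (hΩ : IsOpen Ω) (hF : ContinuousOn F Ω)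
    (hG : ContDiff ℝ 1 G) (hGΩ : tsupport G ⊆ Ω) (hθ : Continuous θ)
    (hθc : HasCompactSupport θ) : Integrable fun x => θ x ^ 2 * ⟪F x, gradient G x⟫ := by
  have hFG : Continuous fun x => ⟪F x, gradient G x⟫ :=
    continuous_of_continuousOn_of_tsupport_subset hΩ
      (hF.inner (𝕜 := ℝ) (continuous_gradient_of_contDiff hG).continuousOn)
      ((tsupport_inner_gradient_subset F G).trans hGΩ)
  simp_rw [pow_two, mul_assoc]
  exact (hθ.mul (hθ.mul hFG)).integrable_of_hasCompactSupport hθc.mul_right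

lemma IsWeaklyDivFree.integral_sq_mul_inner_gradient_le (h : IsWeaklyDivFree F Ω)
    (hΩ : IsOpen Ω) (hF : ContinuousOn F Ω) (hG : ContDiff ℝ 1 G) (hGΩ : tsupport G ⊆ Ω)
    (hJ : ∀ x, 0 ≤ J x) (hFG : ∀ x, 0 ≤ ⟪F x, gradient G x⟫)
    (hFJ : ∀ x, G x ^ 2 * ‖F x‖ ^ 2 ≤ J x * ⟪F x, gradient G x⟫) (hint : Integrable J)
    (hθ : ContDiff ℝ 1 θ) (hθc : HasCompactSupport θ) (hδ : ∀ x, ‖gradient θ x‖ ≤ δ) :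
    ∫ x, θ x ^ 2 * ⟪F x, gradient G x⟫ ≤ 4 * δ ^ 2 * ∫ x, J x := by
  have hφ : ContDiff ℝ 1 fun x => θ x ^ 2 * G x := (hθ.pow 2).mul hG
  have hφc : HasCompactSupport fun x => θ x ^ 2 * G x := by
    simp_rw [pow_two, mul_assoc]
    exact hθc.mul_right
  have hφΩ : tsupport (fun x => θ x ^ 2 * G x) ⊆ Ω := tsupport_mul_subset_right.trans hGΩ
  have hJ' := hint.const_mul (4 * δ ^ 2)
  have hφ' := (integrable_inner_gradient hΩ hF hφ hφc hφΩ).const_mul 2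
  calc ∫ x, θ x ^ 2 * ⟪F x, gradient G x⟫
      ≤ ∫ x, (4 * δ ^ 2 * J x + 2 * ⟪F x, gradient (fun y => θ y ^ 2 * G y) x⟫) :=
        integral_mono (integrable_sq_mul_inner_gradient hΩ hF hG hGΩ hθ.continuous hθc)
          (hJ'.add hφ') fun x => sq_mul_inner_gradient_le (hθ.differentiable one_ne_zero x)
            (hG.differentiable one_ne_zero x) (hδ x) (hJ x) (hFG x) (hFJ x)
    _ = 4 * δ ^ 2 * ∫ x, J x := by
        rw [integral_add hJ' hφ', integral_const_mul, integral_const_mul,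
          h.integral_inner_gradient_eq_zero hΩ hF hφ hφc hφΩ, mul_zero, add_zero]

lemma IsWeaklyDivFree.inner_gradient_eq_zero (h : IsWeaklyDivFree F Ω)
    (hΩ : IsOpen Ω) (hF : ContinuousOn F Ω) (hG : ContDiff ℝ 1 G) (hGΩ : tsupport G ⊆ Ω)
    (hJ : ∀ x, 0 ≤ J x) (hFG : ∀ x, 0 ≤ ⟪F x, gradient G x⟫)
    (hFJ : ∀ x, G x ^ 2 * ‖F x‖ ^ 2 ≤ J x * ⟪F x, gradient G x⟫) (hint : Integrable J)
    (x : E) : ⟪F x, gradient G x⟫ = 0 := by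
  obtain ⟨L, hL⟩ := exists_cutoff E
  have hcont : Continuous fun y => ⟪F y, gradient G y⟫ :=
    continuous_of_continuousOn_of_tsupport_subset hΩ
      (hF.inner (𝕜 := ℝ) (continuous_gradient_of_contDiff hG).continuousOn)
      ((tsupport_inner_gradient_subset F G).trans hGΩ)
  set B := Metric.ball (0 : E) (‖x‖ + 1)
  have hB : IntegrableOn (fun y => ⟪F y, gradient G y⟫) B :=
    (hcont.continuousOn.integrableOn_compact (isCompact_closedBall 0 (‖x‖ + 1))).mono_set
      Metric.ball_subset_closedBall
  have energy : ∀ᶠ N : ℝ in atTop,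
      ∫ y in B, ⟪F y, gradient G y⟫ ≤ 4 * (L / N) ^ 2 * ∫ y, J y := by
    filter_upwards [eventually_ge_atTop (‖x‖ + 1)] with N hN
    obtain ⟨θ, hθ, hθc, hθ1, hθL⟩ := hL N (by linarith [norm_nonneg x])
    refine le_trans ?_
      (h.integral_sq_mul_inner_gradient_le hΩ hF hG hGΩ hJ hFG hFJ hint hθ hθc hθL)
    calc ∫ y in B, ⟪F y, gradient G y⟫ = ∫ y in B, θ y ^ 2 * ⟪F y, gradient G y⟫ := by
          refine setIntegral_congr_fun measurableSet_ball fun y hy => ?_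
          rw [hθ1 y ((mem_ball_zero_iff.1 hy).le.trans hN), one_pow, one_mul]
      _ ≤ ∫ y, θ y ^ 2 * ⟪F y, gradient G y⟫ :=
          setIntegral_le_integral
            (integrable_sq_mul_inner_gradient hΩ hF hG hGΩ hθ.continuous hθc)
            (ae_of_all _ fun y => mul_nonneg (sq_nonneg _) (hFG y))
  have hlim : Tendsto (fun N : ℝ => 4 * (L / N) ^ 2 * ∫ y, J y) atTop (nhds 0) := by
    simpa using (((tendsto_const_nhds (x := L)).div_atTop tendsto_id).pow 2).const_mul 4
      |>.mul_const (∫ y, J y)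
  have integral_eq_zero : ∫ y in B, ⟪F y, gradient G y⟫ = 0 :=
    le_antisymm (ge_of_tendsto hlim energy) (integral_nonneg hFG)
  have ae_eq_zero := (setIntegral_eq_zero_iff_of_nonneg_ae (ae_of_all _ hFG) hB).1
    integral_eq_zero
  exact Measure.eqOn_open_of_ae_eq ae_eq_zero Metric.isOpen_ball hcont.continuousOn
    continuousOn_const (mem_ball_zero_iff.2 (lt_add_one _))

end Liouville

section Truncation

/-- A smooth version of the positive part: `0` for `s ≤ 0` and equal to `s` for `1 ≤ s`. -/
noncomputable def softPos (s : ℝ) : ℝ := s * Real.smoothTransition s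

lemma softPos_eq_zero_iff {s : ℝ} : softPos s = 0 ↔ s ≤ 0 := by
  rw [softPos, mul_eq_zero, Real.smoothTransition.zero_iff_nonpos]
  exact or_iff_right_of_imp le_of_eq

lemma softPos_nonneg (s : ℝ) : 0 ≤ softPos s := by
  rcases le_total s 0 with hs | hs
  · exact (softPos_eq_zero_iff.2 hs).ge
  · exact mul_nonneg hs (Real.smoothTransition.nonneg s)

lemma contDiff_softPos {m : ℕ∞} : ContDiff ℝ m softPos :=
  contDiff_id.mul Real.smoothTransition.contDiff

lemma smoothTransition_le_deriv_softPos (s : ℝ) : Real.smoothTransition s ≤ deriv softPos s := by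
  rcases le_or_gt s 0 with hs | hs
  · have hmin : IsLocalMin softPos s := Eventually.of_forall fun t =>
      (softPos_eq_zero_iff.2 hs).trans_le (softPos_nonneg t)
    rw [hmin.deriv_eq_zero, Real.smoothTransition.zero_of_nonpos hs]
  · have hderiv := ((hasDerivAt_id s).mul
      (Real.smoothTransition.contDiff.differentiable one_ne_zero s).hasDerivAt).deriv
    change deriv softPos s = _ at hderiv
    rw [hderiv, one_mul]
    exact le_add_of_nonneg_right (mul_nonneg hs.le Real.smoothTransition.monotone.deriv_nonneg)

lemma deriv_softPos_nonneg (s : ℝ) : 0 ≤ deriv softPos s :=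
  (Real.smoothTransition.nonneg s).trans (smoothTransition_le_deriv_softPos s)

lemma softPos_sq_le (s : ℝ) : softPos s ^ 2 ≤ max s 0 ^ 2 * deriv softPos s := by
  rcases le_total s 0 with hs | hs
  · rw [softPos_eq_zero_iff.2 hs, max_eq_right hs, zero_pow two_ne_zero, zero_mul]
  · rw [max_eq_left hs, softPos, mul_pow]
    gcongr
    calc Real.smoothTransition s ^ 2 ≤ Real.smoothTransition s :=
          pow_le_of_le_one (Real.smoothTransition.nonneg s) (Real.smoothTransition.le_one s)
            two_ne_zero
      _ ≤ deriv softPos s := smoothTransition_le_deriv_softPos s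

lemma softPos_sq_mul_le {s j q z : ℝ} (hq : 0 ≤ q) (h : max s 0 ^ 2 * q ≤ j * z) :
    softPos s ^ 2 * q ≤ j * (deriv softPos s * z) :=
  calc softPos s ^ 2 * q ≤ max s 0 ^ 2 * deriv softPos s * q :=
        mul_le_mul_of_nonneg_right (softPos_sq_le s) hq
    _ = deriv softPos s * (max s 0 ^ 2 * q) := by ring
    _ ≤ deriv softPos s * (j * z) := mul_le_mul_of_nonneg_left h (deriv_softPos_nonneg s)
    _ = j * (deriv softPos s * z) := by ring

lemma tsupport_indicator_subset_of_frontier {α β : Type*} [TopologicalSpace α] [Zero β]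
    {f : α → β} {D : Set α} (h : ∀ y ∈ frontier D, ∀ᶠ z in nhdsWithin y D, f z = 0) :
    tsupport (D.indicator f) ⊆ D := by
  intro y hy
  by_contra hyD
  have hclosure : y ∈ closure D := closure_mono Set.support_indicator_subset hy
  have hfrontier : y ∈ frontier D := ⟨hclosure, fun hint => hyD (interior_subset hint)⟩
  refine notMem_tsupport_iff_eventuallyEq.2 ?_ hy
  filter_upwards [eventually_nhdsWithin_iff.1 (h y hfrontier)] with z hz
  by_cases hzD : z ∈ D
  · rw [Set.indicator_of_mem hzD, hz hzD, Pi.zero_apply]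
  · rw [Set.indicator_of_notMem hzD, Pi.zero_apply]

lemma indicator_eventuallyEq_of_isOpen {α β : Type*} [TopologicalSpace α] [Zero β] {f : α → β}
    {D : Set α} (hD : IsOpen D) {x : α} (hx : x ∈ D) : D.indicator f =ᶠ[nhds x] f :=
  Set.EqOn.eventuallyEq_of_mem Set.eqOn_indicator (hD.mem_nhds hx)

lemma contDiff_indicator_of_tsupport_subset {E G : Type*} [NormedAddCommGroup E]
    [NormedSpace ℝ E] [NormedAddCommGroup G] [NormedSpace ℝ G] {f : E → G} {D : Set E}
    {m : WithTop ℕ∞} (hD : IsOpen D) (hf : ContDiffOn ℝ m f D)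
    (hs : tsupport (D.indicator f) ⊆ D) : ContDiff ℝ m (D.indicator f) :=
  contDiff_iff_contDiffAt.2 fun x => by
    by_cases hx : x ∈ tsupport (D.indicator f)
    · exact (hf.contDiffAt (hD.mem_nhds (hs hx))).congr_of_eventuallyEq
        (indicator_eventuallyEq_of_isOpen hD (hs hx))
    · exact contDiffAt_const.congr_of_eventuallyEq (notMem_tsupport_iff_eventuallyEq.1 hx)

variable {E : Type*} [NormedAddCommGroup E] [InnerProductSpace ℝ E] [CompleteSpace E]
  {w : E → ℝ} {D : Set E}

lemma gradient_indicator_softPos (hD : IsOpen D) (hw : ContDiffOn ℝ 1 w D) {x : E} (hx : x ∈ D) :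
    gradient (D.indicator fun y => softPos (w y)) x = deriv softPos (w x) • gradient w x := by
  rw [gradient_eq_of_eventuallyEq (indicator_eventuallyEq_of_isOpen hD hx)]
  exact (hasGradientAt_comp (contDiff_softPos.differentiable one_ne_zero (w x)).hasDerivAt
    ((hw.differentiableOn one_ne_zero).differentiableAt (hD.mem_nhds hx)).hasGradientAt).gradient

lemma nonpos_of_gradient_indicator_softPos_eq_zero (hDuniv : D ≠ Set.univ)
    (hdiff : Differentiable ℝ (D.indicator fun y => softPos (w y)))
    (h : ∀ y, gradient (D.indicator fun y => softPos (w y)) y = 0) {x : E} (hx : x ∈ D) :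
    w x ≤ 0 := by
  obtain ⟨z, hz⟩ := (Set.ne_univ_iff_exists_notMem D).1 hDuniv
  have hconst := is_const_of_fderiv_eq_zero (𝕜 := ℝ) hdiff
    (fun y => (map_eq_zero_iff _ (InnerProductSpace.toDual ℝ E).symm.injective).1 (h y)) x z
  rw [Set.indicator_of_mem hx, Set.indicator_of_notMem hz] at hconst
  exact softPos_eq_zero_iff.1 hconst

end Truncation

section Comparison

variable {E : Type*} [NormedAddCommGroup E] [InnerProductSpace ℝ E] [FiniteDimensional ℝ E]
  {D : Set E} {p : ℝ} {V u : E → ℝ}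

lemma continuousOn_pFlux_gradient {f : E → ℝ} (hp : 1 < p) (hD : IsOpen D)
    (hf : ContDiffOn ℝ 1 f D) : ContinuousOn (fun x => pFlux p (gradient f x)) D :=
  (continuous_pFlux hp).comp_continuousOn (continuousOn_gradient_of_contDiffOn hD hf)

/-- The integrand `|V - u|² (|∇V|^{|p-2|} + |∇u|^{|p-2|})` of the Phragmén–Lindelöf
condition. -/
noncomputable def comparisonWeight (p : ℝ) (V u : E → ℝ) (x : E) : ℝ :=
  |V x - u x| ^ 2 * (‖gradient V x‖ ^ |p - 2| + ‖gradient u x‖ ^ |p - 2|)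

lemma comparisonWeight_nonneg (p : ℝ) (V u : E → ℝ) (x : E) : 0 ≤ comparisonWeight p V u x := by
  unfold comparisonWeight
  positivity

lemma continuousOn_comparisonWeight (hD : IsOpen D) (hV : ContDiffOn ℝ 1 V D)
    (hu : ContDiffOn ℝ 1 u D) : ContinuousOn (comparisonWeight p V u) D :=
  ((hV.continuousOn.sub hu.continuousOn).abs.pow 2).mul
    (((continuousOn_gradient_of_contDiffOn hD hV).norm.rpow_const
      fun _ _ => Or.inr (abs_nonneg _)).add
    ((continuousOn_gradient_of_contDiffOn hD hu).norm.rpow_const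
      fun _ _ => Or.inr (abs_nonneg _)))

variable [MeasurableSpace E] [BorelSpace E] {F : E → E} {w J : E → ℝ}

lemma integrableOn_comparisonWeight_of_lintegral_lt_top (hD : IsOpen D)
    (hV : ContDiffOn ℝ 1 V D) (hu : ContDiffOn ℝ 1 u D)
    (hint : ∫⁻ x in D, ENNReal.ofReal (comparisonWeight p V u x) < ⊤) :
    IntegrableOn (comparisonWeight p V u) D := by
  refine ⟨(continuousOn_comparisonWeight hD hV hu).aestronglyMeasurable hD.measurableSet, ?_⟩
  rwa [hasFiniteIntegral_iff_ofReal (ae_of_all _ (comparisonWeight_nonneg p V u))]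

lemma IsWeaklyDivFree.inner_gradient_indicator_softPos_eq_zero (h : IsWeaklyDivFree F D)
    (hD : IsOpen D) (hF : ContinuousOn F D) (hw : ContDiffOn ℝ 1 w D)
    (hs : tsupport (D.indicator fun y => softPos (w y)) ⊆ D)
    (hJ : ∀ x ∈ D, 0 ≤ J x) (hFw : ∀ x ∈ D, 0 ≤ ⟪F x, gradient w x⟫)
    (hFJ : ∀ x ∈ D, max (w x) 0 ^ 2 * ‖F x‖ ^ 2 ≤ J x * ⟪F x, gradient w x⟫)
    (hint : IntegrableOn J D) (x : E) :
    ⟪F x, gradient (D.indicator fun y => softPos (w y)) x⟫ = 0 := by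
  have hG : ContDiff ℝ 1 (D.indicator fun y => softPos (w y)) :=
    contDiff_indicator_of_tsupport_subset hD (contDiff_softPos.comp_contDiffOn hw) hs
  have inner_eq : ∀ y ∈ D, ⟪F y, gradient (D.indicator fun y => softPos (w y)) y⟫ =
      deriv softPos (w y) * ⟪F y, gradient w y⟫ := fun y hy => by
    rw [gradient_indicator_softPos hD hw hy, real_inner_smul_right]
  have inner_eq_zero : ∀ y ∉ D, ⟪F y, gradient (D.indicator fun y => softPos (w y)) y⟫ = 0 :=
    fun y hy => by
      rw [gradient_eq_zero_of_notMem_tsupport fun hy' => hy (hs hy'), inner_zero_right]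
  refine h.inner_gradient_eq_zero (J := D.indicator J) hD hF hG hs (Set.indicator_nonneg hJ)
    (fun y => ?_) (fun y => ?_) ((integrable_indicator_iff hD.measurableSet).2 hint) x
  · by_cases hy : y ∈ D
    · rw [inner_eq y hy]
      exact mul_nonneg (deriv_softPos_nonneg _) (hFw y hy)
    · exact (inner_eq_zero y hy).ge
  · by_cases hy : y ∈ D
    · rw [inner_eq y hy, Set.indicator_of_mem hy, Set.indicator_of_mem hy]
      exact softPos_sq_mul_le (sq_nonneg _) (hFJ y hy)
    · rw [inner_eq_zero y hy, Set.indicator_of_notMem hy, mul_zero, zero_pow two_ne_zero,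
        zero_mul]

lemma IsWeaklyDivFree.nonpos_of_frontier (h : IsWeaklyDivFree F D) (hD : IsOpen D)
    (hDuniv : D ≠ Set.univ) (hF : ContinuousOn F D) (hw : ContDiffOn ℝ 1 w D)
    (hfrontier : ∀ y ∈ frontier D, ∀ᶠ z in nhdsWithin y D, w z ≤ 0)
    (hJ : ∀ x ∈ D, 0 ≤ J x) (hFw : ∀ x ∈ D, 0 ≤ ⟪F x, gradient w x⟫)
    (hFJ : ∀ x ∈ D, max (w x) 0 ^ 2 * ‖F x‖ ^ 2 ≤ J x * ⟪F x, gradient w x⟫)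
    (hFw0 : ∀ x ∈ D, ⟪F x, gradient w x⟫ = 0 → gradient w x = 0)
    (hint : IntegrableOn J D) {x : E} (hx : x ∈ D) : w x ≤ 0 := by
  have hs : tsupport (D.indicator fun y => softPos (w y)) ⊆ D :=
    tsupport_indicator_subset_of_frontier fun y hy =>
      (hfrontier y hy).mono fun _ hz => softPos_eq_zero_iff.2 hz
  refine nonpos_of_gradient_indicator_softPos_eq_zero hDuniv
    ((contDiff_indicator_of_tsupport_subset hD
      (contDiff_softPos.comp_contDiffOn hw) hs).differentiable one_ne_zero) (fun y => ?_) hx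
  by_cases hy : y ∈ D
  · have inner_eq_zero :=
      h.inner_gradient_indicator_softPos_eq_zero hD hF hw hs hJ hFw hFJ hint y
    rw [gradient_indicator_softPos hD hw hy, real_inner_smul_right] at inner_eq_zero
    rw [gradient_indicator_softPos hD hw hy, smul_eq_zero]
    exact (mul_eq_zero.1 inner_eq_zero).imp_right (hFw0 y hy)
  · exact gradient_eq_zero_of_notMem_tsupport fun hy' => hy (hs hy')

lemma le_of_integrableOn_comparisonWeight {β : ℝ} (hp : 1 < p) (hβ : 0 < β)
    (hD : IsOpen D) (hDuniv : D ≠ Set.univ) (hV : ContDiffOn ℝ 1 V D) (hu : ContDiffOn ℝ 1 u D)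
    (hVharm : IsWeaklyDivFree (fun x => pFlux p (gradient V x)) D)
    (huharm : IsWeaklyDivFree (fun x => pFlux p (gradient u x)) D)
    (hβu : ∀ x ∈ D, β ≤ ‖gradient u x‖)
    (hfrontier : ∀ y ∈ frontier D, ∀ ε > 0, ∀ᶠ z in nhdsWithin y D, V z - u z < ε)
    (hint : IntegrableOn (comparisonWeight p V u) D) {x : E} (hx : x ∈ D) : V x ≤ u x := by
  obtain ⟨C, hC, hCF⟩ := exists_norm_pFlux_sub_sq_le (E := E) hp hβ
  have hVF := continuousOn_pFlux_gradient hp hD hV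
  have huF := continuousOn_pFlux_gradient hp hD hu
  refine le_of_forall_pos_le_add fun ε hε => ?_
  have hgradient : ∀ y ∈ D, gradient (fun z => V z - u z - ε) y =
      gradient V y - gradient u y := by
    intro y hy
    have hVy := (hV.differentiableOn one_ne_zero).differentiableAt (hD.mem_nhds hy)
    have huy := (hu.differentiableOn one_ne_zero).differentiableAt (hD.mem_nhds hy)
    rw [gradient, fderiv_sub_const, fderiv_fun_sub hVy huy, map_sub, gradient, gradient]
  suffices V x - u x - ε ≤ 0 by linarith
  refine (hVharm.sub huharm hD hVF huF).nonpos_of_frontier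
    (J := fun y => C * comparisonWeight p V u y) (w := fun y => V y - u y - ε) hD hDuniv
    (hVF.sub huF) ((hV.sub hu).sub contDiffOn_const) (fun y hy => ?_) (fun y _ => ?_)
    (fun y hy => ?_) (fun y hy => ?_) (fun y hy h0 => ?_) (hint.const_mul C) hx
  · exact (hfrontier y hy ε hε).mono fun z hz => (sub_neg.2 hz).le
  · exact mul_nonneg hC (comparisonWeight_nonneg p V u y)
  · rw [hgradient y hy]
    exact inner_pFlux_sub_nonneg hp _ _
  · have hmax : max (V y - u y - ε) 0 ≤ |V y - u y| :=
      max_le ((sub_le_self _ hε.le).trans (le_abs_self _)) (abs_nonneg _)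
    calc max (V y - u y - ε) 0 ^ 2 * ‖pFlux p (gradient V y) - pFlux p (gradient u y)‖ ^ 2
        ≤ |V y - u y| ^ 2 * (C * (‖gradient V y‖ ^ |p - 2| + ‖gradient u y‖ ^ |p - 2|) *
            ⟪pFlux p (gradient V y) - pFlux p (gradient u y), gradient V y - gradient u y⟫) :=
          mul_le_mul (pow_le_pow_left₀ (le_max_right _ _) hmax 2) (hCF _ _ (hβu y hy))
            (sq_nonneg _) (sq_nonneg _)
      _ = _ := by
          rw [hgradient y hy, comparisonWeight]
          ring
  · rw [hgradient y hy] at h0 ⊢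
    have hflux := hCF (gradient V y) (gradient u y) (hβu y hy)
    rw [h0, mul_zero, sq_nonpos_iff, norm_eq_zero] at hflux
    exact sub_eq_zero.2 (pFlux_injective hp (sub_eq_zero.1 hflux))

end Comparison

section Projection

variable {E : Type*} [NormedAddCommGroup E] [InnerProductSpace ℝ E]

lemma norm_inv_norm_smul {x : E} (hx : x ≠ 0) : ‖‖x‖⁻¹ • x‖ = 1 := by
  rw [norm_smul, norm_inv, norm_norm, inv_mul_cancel₀ (norm_ne_zero_iff.2 hx)]

lemma contDiffOn_norm_apply (P : E →L[ℝ] E) : ContDiffOn ℝ 1 (fun x => ‖P x‖) {x | P x ≠ 0} :=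
  P.contDiff.contDiffOn.norm ℝ fun _ hx => hx

lemma isOpen_apply_ne_zero (P : E →L[ℝ] E) : IsOpen {x | P x ≠ 0} :=
  isOpen_ne_fun P.continuous continuous_const

lemma contDiffOn_norm_rpow_smul (P : E →L[ℝ] E) (a : ℝ) :
    ContDiffOn ℝ 1 (fun x => ‖P x‖ ^ a • P x) {x | P x ≠ 0} :=
  ((contDiffOn_norm_apply P).rpow_const_of_ne fun _ hx => norm_ne_zero_iff.2 hx).smul
    P.contDiff.contDiffOn

variable [CompleteSpace E] {P : E →L[ℝ] E}

lemma inner_apply_apply_of_isStarProjection (hP : IsStarProjection P) (x y : E) :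
    ⟪P x, P y⟫ = ⟪P x, y⟫ := by
  rw [← ContinuousLinearMap.adjoint_inner_left, ← ContinuousLinearMap.star_eq_adjoint,
    hP.isSelfAdjoint.star_eq]
  exact congrArg (inner ℝ · y) (DFunLike.congr_fun hP.isIdempotentElem x)

lemma hasGradientAt_norm_apply_of_isStarProjection (hP : IsStarProjection P) {x : E}
    (hx : P x ≠ 0) : HasGradientAt (fun y => ‖P y‖) (‖P x‖⁻¹ • P x) x := by
  have hsqrt := P.hasFDerivAt.norm_sq.sqrt (x := x) (pow_ne_zero 2 (norm_ne_zero_iff.2 hx))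
  simp only [Real.sqrt_sq (norm_nonneg _)] at hsqrt
  rw [hasGradientAt_iff_hasFDerivAt]
  refine hsqrt.congr_fderiv (ContinuousLinearMap.ext fun y => ?_)
  have hnorm : ‖P x‖ ≠ 0 := norm_ne_zero_iff.2 hx
  simp only [smul_apply, ContinuousLinearMap.comp_apply, innerSL_apply_apply,
    InnerProductSpace.toDual_apply_apply, real_inner_smul_left,
    inner_apply_apply_of_isStarProjection hP, smul_eq_mul, nsmul_eq_mul]
  field_simp
  push_cast
  ring

lemma gradient_comp_norm_apply_of_isStarProjection (hP : IsStarProjection P) {U : ℝ → ℝ} {U' : ℝ}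
    {x : E} (hx : P x ≠ 0) (hU : HasDerivAt U U' ‖P x‖) :
    gradient (fun y => U ‖P y‖) x = U' • ‖P x‖⁻¹ • P x :=
  (hasGradientAt_comp (φ := fun y => ‖P y‖) hU
    (hasGradientAt_norm_apply_of_isStarProjection hP hx)).gradient

end Projection

section Radial

variable {E : Type*} [NormedAddCommGroup E] [InnerProductSpace ℝ E] [FiniteDimensional ℝ E]
  {P : E →L[ℝ] E}

lemma trace_fderiv_norm_rpow_smul (hP : IsStarProjection P) (a : ℝ) {x : E} (hx : P x ≠ 0) :
    LinearMap.trace ℝ E (fderiv ℝ (fun y => ‖P y‖ ^ a • P y) x) =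
      (LinearMap.trace ℝ E P + a) * ‖P x‖ ^ a := by
  have hnorm : 0 < ‖P x‖ := norm_pos_iff.2 hx
  have hrpow : HasFDerivAt (fun y => ‖P y‖ ^ a) _ x :=
    (hasGradientAt_comp (φ := fun y => ‖P y‖) (Real.hasDerivAt_rpow_const (p := a)
      (Or.inl hnorm.ne')) (hasGradientAt_norm_apply_of_isStarProjection hP hx)).hasFDerivAt
  rw [(hrpow.fun_smul P.hasFDerivAt).fderiv, ContinuousLinearMap.toLinearMap_add, map_add,
    ContinuousLinearMap.toLinearMap_smul, map_smul, ContinuousLinearMap.coe_smulRight,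
    LinearMap.trace_smulRight]
  simp only [ContinuousLinearMap.coe_coe, InnerProductSpace.toDual_apply_apply,
    real_inner_smul_left, real_inner_self_eq_norm_sq]
  rw [Real.rpow_sub_one hnorm.ne', smul_eq_mul]
  field_simp

variable [MeasurableSpace E] [BorelSpace E]

lemma isWeaklyDivFree_norm_rpow_neg_trace_smul (hP : IsStarProjection P) :
    IsWeaklyDivFree (fun x => ‖P x‖ ^ (-LinearMap.trace ℝ E P) • P x) {x | P x ≠ 0} :=
  isWeaklyDivFree_of_trace_fderiv_eq_zero (isOpen_apply_ne_zero P)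
    (contDiffOn_norm_rpow_smul P _) fun x hx => by
      rw [trace_fderiv_norm_rpow_smul hP _ hx, add_neg_cancel, zero_mul]

lemma isWeaklyDivFree_pFlux_gradient_comp_norm_apply (hP : IsStarProjection P) {p c : ℝ} {U : ℝ → ℝ}
    (hp : 1 < p) (hc : 0 < c)
    (hU : ∀ t > 0, HasDerivAt U (c * t ^ ((1 - LinearMap.trace ℝ E P) / (p - 1))) t) :
    IsWeaklyDivFree (fun x => pFlux p (gradient (fun y => U ‖P y‖) x)) {x | P x ≠ 0} := by
  refine ((isWeaklyDivFree_norm_rpow_neg_trace_smul hP).const_smul (c ^ (p - 1))).congr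
    fun x hx => ?_
  have hnorm : 0 < ‖P x‖ := norm_pos_iff.2 hx
  have hpow : 0 < ‖P x‖ ^ ((1 - LinearMap.trace ℝ E P) / (p - 1)) := Real.rpow_pos_of_pos hnorm _
  simp only
  rw [gradient_comp_norm_apply_of_isStarProjection hP hx (hU _ hnorm), pFlux_smul (mul_pos hc hpow),
    pFlux_of_norm_eq_one (norm_inv_norm_smul hx), Real.mul_rpow hc.le hpow.le,
    ← Real.rpow_mul hnorm.le, div_mul_cancel₀ _ (sub_pos.2 hp).ne', mul_smul,
    smul_smul (‖P x‖ ^ _), Real.rpow_sub hnorm, Real.rpow_neg hnorm.le, Real.rpow_one]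
  congr 2
  field_simp

end Radial

section Coordinates

variable {n k : ℕ}

/-- The orthogonal projection of `ℝⁿ` onto the first `k` coordinates, whose norm is `d_k`. -/
noncomputable def headProj (n k : ℕ) : EuclideanSpace ℝ (Fin n) →L[ℝ] EuclideanSpace ℝ (Fin n) :=
  Matrix.toEuclideanCLM (𝕜 := ℝ) (Matrix.diagonal fun i => if (i : ℕ) < k then 1 else 0)

lemma headProj_apply (x : EuclideanSpace ℝ (Fin n)) (i : Fin n) :
    headProj n k x i = if (i : ℕ) < k then x i else 0 := by
  simp [headProj, Matrix.ofLp_toEuclideanCLM, Matrix.mulVec_diagonal]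

lemma isStarProjection_headProj : IsStarProjection (headProj n k) := by
  refine IsStarProjection.map (f := Matrix.toEuclideanCLM (𝕜 := ℝ)) ⟨?_, ?_⟩
  · rw [IsIdempotentElem, Matrix.diagonal_mul_diagonal]
    congr 1
    ext i
    split_ifs <;> simp only [mul_one, mul_zero]
  · exact Matrix.isHermitian_diagonal _

lemma trace_headProj (hkn : k ≤ n) :
    LinearMap.trace ℝ (EuclideanSpace ℝ (Fin n)) (headProj n k) = k := by
  rw [headProj, Matrix.coe_toEuclideanCLM_eq_toEuclideanLin,
    Matrix.toEuclideanLin_eq_toLin_orthonormal, Matrix.trace_toLin_eq, Matrix.trace_diagonal,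
    Finset.sum_boole, Fin.card_filter_val_lt, min_eq_right hkn]

lemma norm_headProj (x : EuclideanSpace ℝ (Fin n)) : ‖headProj n k x‖ = dk n k x := by
  simp only [EuclideanSpace.norm_eq, headProj_apply, dk, Finset.sum_filter, Real.norm_eq_abs,
    sq_abs, ite_pow, zero_pow two_ne_zero]

lemma continuous_dk : Continuous (dk n k) := by
  unfold dk
  fun_prop

lemma SigmaK_nonempty (hk1 : 1 ≤ k) (hkn : k ≤ n) {t : ℝ} (ht : 0 ≤ t) :
    (SigmaK n k t).Nonempty := by
  let i₀ : Fin n := ⟨0, by lia⟩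
  refine ⟨EuclideanSpace.single i₀ t, ?_⟩
  have hfixed : headProj n k (EuclideanSpace.single i₀ t) = EuclideanSpace.single i₀ t := by
    ext i
    rw [headProj_apply, ite_eq_left_iff]
    intro hi
    have hne : i ≠ i₀ := fun h => hi (h ▸ hk1)
    rw [PiLp.single_apply, if_neg hne]
  rw [SigmaK, Set.mem_ofPred_eq, ← norm_headProj, hfixed, PiLp.norm_single,
    Real.norm_of_nonneg ht]

end Coordinates

section RadialProfile

variable {n k : ℕ} {p r R : ℝ}

/-- The paper's `ξ(r,t) = ∫_r^t s^{(1-k)/(p-1)} ds`. -/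
noncomputable def xi (k : ℕ) (p r t : ℝ) : ℝ := ∫ s in r..t, s ^ ((1 - (k : ℝ)) / (p - 1))

lemma hasDerivAt_xi (hr : 0 < r) {t : ℝ} (ht : 0 < t) :
    HasDerivAt (xi k p r) (t ^ ((1 - (k : ℝ)) / (p - 1))) t := by
  have hcont : ContinuousOn (fun s : ℝ => s ^ ((1 - (k : ℝ)) / (p - 1))) (Set.Ioi 0) :=
    fun s hs => (Real.continuousAt_rpow_const _ _ (Or.inl (ne_of_gt hs))).continuousWithinAt
  have hint : IntervalIntegrable (fun s : ℝ => s ^ ((1 - (k : ℝ)) / (p - 1))) volume r t :=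
    intervalIntegral.intervalIntegrable_rpow (Or.inr fun h => (lt_min hr ht).not_ge h.1)
  exact intervalIntegral.integral_hasDerivAt_right hint
    (hcont.stronglyMeasurableAtFilter isOpen_Ioi _ ht) (hcont.continuousAt (Ioi_mem_nhds ht))

lemma xi_nonneg (hr : 0 < r) {t : ℝ} (ht : r ≤ t) : 0 ≤ xi k p r t :=
  intervalIntegral.integral_nonneg ht fun _ hs => Real.rpow_nonneg (hr.le.trans hs.1) _

lemma xi_pos (hr : 0 < r) {t : ℝ} (ht : r < t) : 0 < xi k p r t :=
  intervalIntegral.intervalIntegral_pos_of_pos_on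
    (intervalIntegral.intervalIntegrable_rpow
      (Or.inr fun h => (lt_min hr (hr.trans ht)).not_ge h.1))
    (fun _ hs => Real.rpow_pos_of_pos (hr.trans hs.1) _) ht

lemma hasDerivAt_u0 (hr : 0 < r) {t : ℝ} (ht : 0 < t) :
    HasDerivAt (u0 k p r R) ((xi k p r R)⁻¹ * t ^ ((1 - (k : ℝ)) / (p - 1))) t := by
  rw [inv_mul_eq_div]
  exact (hasDerivAt_xi hr ht).div_const _

lemma contDiffOn_u0 (hr : 0 < r) : ContDiffOn ℝ 1 (u0 k p r R) (Set.Ioi 0) := by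
  rw [← zero_add (1 : WithTop ℕ∞), contDiffOn_succ_iff_deriv_of_isOpen isOpen_Ioi]
  refine ⟨fun t ht => (hasDerivAt_u0 hr ht).differentiableAt.differentiableWithinAt,
    fun h => absurd h (by decide), contDiffOn_zero.2 ?_⟩
  refine ContinuousOn.congr (fun t ht => ?_) fun t ht => (hasDerivAt_u0 hr ht).deriv
  exact ((Real.continuousAt_rpow_const _ _ (Or.inl ht.ne')).const_mul _).continuousWithinAt

lemma u0_nonneg (hr : 0 < r) (hrR : r < R) {t : ℝ} (ht : r ≤ t) : 0 ≤ u0 k p r R t :=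
  div_nonneg (xi_nonneg hr ht) (xi_pos hr hrR).le

lemma u0_self (hr : 0 < r) (hrR : r < R) : u0 k p r R R = 1 := div_self (xi_pos hr hrR).ne'

lemma uComp_eq_comp_norm_headProj :
    uComp n k p r R = fun x => u0 k p r R ‖headProj n k x‖ :=
  funext fun x => by rw [uComp, norm_headProj]

lemma contDiffOn_uComp (hr : 0 < r) :
    ContDiffOn ℝ 1 (uComp n k p r R) {x | headProj n k x ≠ 0} := by
  rw [uComp_eq_comp_norm_headProj]
  exact (contDiffOn_u0 hr).comp (contDiffOn_norm_apply _) fun x hx => norm_pos_iff.2 hx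

lemma isWeaklyDivFree_pFlux_gradient_uComp (hkn : k ≤ n) (hp : 1 < p) (hr : 0 < r) (hrR : r < R) :
    IsWeaklyDivFree (fun x => pFlux p (gradient (uComp n k p r R) x)) {x | headProj n k x ≠ 0} := by
  rw [uComp_eq_comp_norm_headProj]
  refine isWeaklyDivFree_pFlux_gradient_comp_norm_apply isStarProjection_headProj hp
    (inv_pos.2 (xi_pos (k := k) (p := p) hr hrR)) fun t ht => ?_
  rw [trace_headProj hkn]
  exact hasDerivAt_u0 hr ht

lemma norm_gradient_uComp (hr : 0 < r) (hrR : r < R) {x : EuclideanSpace ℝ (Fin n)}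
    (hx : headProj n k x ≠ 0) :
    ‖gradient (uComp n k p r R) x‖ = (xi k p r R)⁻¹ * dk n k x ^ ((1 - (k : ℝ)) / (p - 1)) := by
  have hpos := mul_pos (inv_pos.2 (xi_pos (k := k) (p := p) hr hrR))
    (Real.rpow_pos_of_pos (norm_pos_iff.2 hx) ((1 - (k : ℝ)) / (p - 1)))
  rw [uComp_eq_comp_norm_headProj, gradient_comp_norm_apply_of_isStarProjection
    isStarProjection_headProj hx (hasDerivAt_u0 hr (norm_pos_iff.2 hx)), norm_smul,
    norm_inv_norm_smul hx, mul_one, Real.norm_of_nonneg hpos.le, norm_headProj]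

end RadialProfile

section Shell

variable {n k : ℕ} {p r R : ℝ}

/-- The paper's `D_{r,R} = {x : r < d_k(x) < R}` for finite `R`. -/
def shell (n k : ℕ) (r R : ℝ) : Set (EuclideanSpace ℝ (Fin n)) := dk n k ⁻¹' Set.Ioo r R

lemma isOpen_DInf : IsOpen (DInf n k r) := isOpen_lt continuous_const continuous_dk

lemma isOpen_shell : IsOpen (shell n k r R) := isOpen_Ioo.preimage continuous_dk

lemma shell_subset_DInf : shell n k r R ⊆ DInf n k r := fun _ hx => hx.1

lemma headProj_ne_zero_of_mem_DInf (hr : 0 < r) {x : EuclideanSpace ℝ (Fin n)}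
    (hx : x ∈ DInf n k r) : headProj n k x ≠ 0 := by
  rw [← norm_pos_iff, norm_headProj]
  exact hr.trans hx

lemma shell_ne_univ (hr : 0 < r) : shell n k r R ≠ Set.univ := fun h =>
  headProj_ne_zero_of_mem_DInf hr (shell_subset_DInf (h.ge (Set.mem_univ 0))) (map_zero _)

lemma frontier_shell_subset (hrR : r < R) :
    frontier (shell n k r R) ⊆ SigmaK n k r ∪ SigmaK n k R := fun y hy => by
  have := continuous_dk.frontier_preimage_subset _ hy
  rwa [frontier_Ioo hrR] at this

lemma exists_le_norm_gradient_uComp (hr : 0 < r) (hrR : r < R) :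
    ∃ β > 0, ∀ x ∈ shell n k r R, β ≤ ‖gradient (uComp n k p r R) x‖ := by
  obtain ⟨β, hβ, hβt⟩ := (isCompact_Icc (a := r) (b := R)).exists_forall_le'
    (f := fun t => (xi k p r R)⁻¹ * t ^ ((1 - (k : ℝ)) / (p - 1))) (a := 0)
    (fun t ht => ((Real.continuousAt_rpow_const _ _
      (Or.inl (hr.trans_le ht.1).ne')).const_mul _).continuousWithinAt)
    fun t ht => mul_pos (inv_pos.2 (xi_pos hr hrR)) (Real.rpow_pos_of_pos (hr.trans_le ht.1) _)
  refine ⟨β, hβ, fun x hx => ?_⟩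
  rw [norm_gradient_uComp hr hrR (headProj_ne_zero_of_mem_DInf hr (shell_subset_DInf hx))]
  exact hβt _ ⟨hx.1.le, hx.2.le⟩

end Shell

section Harmonic

variable {n : ℕ} {p : ℝ} {Ω Ω' : Set (EuclideanSpace ℝ (Fin n))} {v : EuclideanSpace ℝ (Fin n) → ℝ}

lemma isPHarmonic_iff_isWeaklyDivFree_pFlux :
    IsPHarmonic n p Ω v ↔ IsWeaklyDivFree (fun x => pFlux p (gradient v x)) Ω := by
  refine forall₄_congr fun φ _ _ hs => ?_
  rw [setIntegral_eq_integral_of_forall_compl_eq_zero fun x hx => by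
    rw [gradient_eq_zero_of_notMem_tsupport fun h => hx (hs h), inner_zero_right, mul_zero]]
  simp only [pFlux, real_inner_smul_left]

lemma IsPHarmonic.mono (h : IsPHarmonic n p Ω v) (hΩ : Ω' ⊆ Ω) : IsPHarmonic n p Ω' v :=
  isPHarmonic_iff_isWeaklyDivFree_pFlux.2
    ((isPHarmonic_iff_isWeaklyDivFree_pFlux.1 h).mono hΩ)

lemma IsPHarmonic.isWeaklyDivFree_pFlux_sub_const_div_const (h : IsPHarmonic n p Ω v)
    (hΩ : IsOpen Ω) (hv : DifferentiableOn ℝ v Ω) (m : ℝ) {a : ℝ} (ha : 0 < a) :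
    IsWeaklyDivFree (fun x => pFlux p (gradient (fun y => (v y - m) / a) x)) Ω := by
  refine ((isPHarmonic_iff_isWeaklyDivFree_pFlux.1 h).const_smul (a⁻¹ ^ (p - 1))).congr
    fun x hx => ?_
  simp only [gradient_sub_const_div_const (hv.differentiableAt (hΩ.mem_nhds hx)),
    pFlux_smul (inv_pos.2 ha)]

end Harmonic

section Main

variable {n k : ℕ} {p r R m M : ℝ} {v : EuclideanSpace ℝ (Fin n) → ℝ}

lemma eventually_normalized_sub_uComp_lt (hr : 0 < r) (hrR : r < R) (hmM : m < M)
    (hinner : ∀ y ∈ SigmaK n k r, ∀ c > m, ∀ᶠ z in nhdsWithin y (shell n k r R), v z < c)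
    (houter : ∀ y ∈ SigmaK n k R, ∀ c > M, ∀ᶠ z in nhdsWithin y (shell n k r R), v z < c) :
    ∀ y ∈ frontier (shell n k r R), ∀ ε > 0, ∀ᶠ z in nhdsWithin y (shell n k r R),
      (v z - m) / (M - m) - uComp n k p r R z < ε := by
  intro y hy ε hε
  have hpos : 0 < M - m := sub_pos.2 hmM
  rcases frontier_shell_subset hrR hy with hyr | hyR
  · filter_upwards [hinner y hyr (m + ε * (M - m)) (lt_add_of_pos_right m (mul_pos hε hpos)),
      self_mem_nhdsWithin] with z hz hzD
    have hVz : (v z - m) / (M - m) < ε := by rwa [div_lt_iff₀ hpos, sub_lt_iff_lt_add']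
    exact (sub_le_self _ (u0_nonneg hr hrR hzD.1.le)).trans_lt hVz
  · have hu : Tendsto (uComp n k p r R) (nhds y) (nhds 1) := by
      rw [← u0_self (k := k) (p := p) hr hrR, ← show dk n k y = R from hyR]
      exact ((hasDerivAt_u0 hr (hyR ▸ hr.trans hrR)).continuousAt.comp
        continuous_dk.continuousAt).tendsto
    filter_upwards [houter y hyR (M + ε / 2 * (M - m))
      (lt_add_of_pos_right M (mul_pos (half_pos hε) hpos)),
      nhdsWithin_le_nhds (hu.eventually (lt_mem_nhds (sub_lt_self 1 (half_pos hε))))]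
      with z hz huz
    have hVz : (v z - m) / (M - m) < 1 + ε / 2 := by
      rw [div_lt_iff₀ hpos]
      linarith
    linarith

theorem stmt_3_general (hkn : k ≤ n) (hp : 1 < p) (hr : 0 < r) (hrR : r < R) (hmM : m < M)
    (hv : ContDiffOn ℝ 1 v (shell n k r R)) (hharm : IsPHarmonic n p (shell n k r R) v)
    (hinner : ∀ y ∈ SigmaK n k r, ∀ c > m, ∀ᶠ z in nhdsWithin y (shell n k r R), v z < c)
    (houter : ∀ y ∈ SigmaK n k R, ∀ c > M, ∀ᶠ z in nhdsWithin y (shell n k r R), v z < c)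
    (hint : IntegrableOn (comparisonWeight p (fun x => (v x - m) / (M - m)) (uComp n k p r R))
      (shell n k r R)) :
    ∀ x ∈ shell n k r R, v x ≤ (M - m) * u0 k p r R (dk n k x) + m := by
  intro x hx
  have hpos : 0 < M - m := sub_pos.2 hmM
  have shell_subset : shell n k r R ⊆ {x | headProj n k x ≠ 0} := fun _ hy =>
    headProj_ne_zero_of_mem_DInf hr (shell_subset_DInf hy)
  obtain ⟨β, hβ, hβu⟩ := exists_le_norm_gradient_uComp (n := n) (k := k) (p := p) hr hrR
  have normalized_le : (v x - m) / (M - m) ≤ uComp n k p r R x :=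
    le_of_integrableOn_comparisonWeight hp hβ isOpen_shell (shell_ne_univ hr)
      ((hv.sub contDiffOn_const).div_const _) ((contDiffOn_uComp hr).mono shell_subset)
      (hharm.isWeaklyDivFree_pFlux_sub_const_div_const isOpen_shell
        (hv.differentiableOn one_ne_zero) m hpos)
      ((isWeaklyDivFree_pFlux_gradient_uComp hkn hp hr hrR).mono shell_subset) hβu
      (eventually_normalized_sub_uComp_lt hr hrR hmM hinner houter) hint hx
  rwa [div_le_iff₀' hpos, sub_le_iff_le_add] at normalized_le

lemma Mfun_of_ne {t : ℝ} (ht : t ≠ r) : Mfun n k r v t = sSup (v '' SigmaK n k t) := if_neg ht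

lemma Mfun_le {t c : ℝ} (ht : t ≠ r) (hne : (SigmaK n k t).Nonempty)
    (h : ∀ x ∈ SigmaK n k t, v x ≤ c) : Mfun n k r v t ≤ c := by
  rw [Mfun_of_ne ht]
  exact csSup_le (hne.image v) (Set.forall_mem_image.2 h)

lemma eventually_lt_of_Mfun_self_lt
    (hbdd : IsBoundedUnder (· ≤ ·) (nhdsSet (SigmaK n k r) ⊓ principal (DInf n k r)) v)
    {y : EuclideanSpace ℝ (Fin n)} (hy : y ∈ SigmaK n k r) {c : ℝ} (hc : Mfun n k r v r < c) :
    ∀ᶠ z in nhdsWithin y (DInf n k r), v z < c := by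
  rw [Mfun, if_pos rfl] at hc
  exact (eventually_lt_of_limsup_lt hc hbdd).filter_mono
    (inf_le_inf_right _ (nhds_le_nhdsSet hy))

lemma eventually_lt_of_Mfun_lt {t : ℝ} (ht : r < t) (hv : ContinuousOn v (DInf n k r))
    (hbdd : BddAbove (v '' SigmaK n k t)) {y : EuclideanSpace ℝ (Fin n)} (hy : y ∈ SigmaK n k t)
    {c : ℝ} (hc : Mfun n k r v t < c) : ∀ᶠ z in nhdsWithin y (DInf n k r), v z < c := by
  rw [Mfun_of_ne ht.ne'] at hc
  have hyD : y ∈ DInf n k r := ht.trans_eq (Eq.symm hy)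
  exact (hv y hyD).eventually_lt_const ((le_csSup hbdd (Set.mem_image_of_mem v hy)).trans_lt hc)

end Main

/-- Corollary (corb): if `v` is a continuously differentiable `p`-harmonic function on
`D_{r,∞}` with `M(t)` finite for all `t ≥ r`, `M(R) > M(r)`, and
`∫_{D_{r,∞}} |v_{r,R}-u|²(|∇v_{r,R}|^{|p-2|}+|∇u|^{|p-2|}) dm < ∞`,
then `M(t) ≤ (M(R)-M(r)) u₀(t) + M(r)` for all `t ∈ (r,R)`. -/
theorem stmt_3 (n k : ℕ) (hn : 2 ≤ n) (hk1 : 1 ≤ k) (hkn : k ≤ n) (p r R : ℝ)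
    (hp : 1 < p) (hr : 0 < r) (hrR : r < R)
    (v : EuclideanSpace ℝ (Fin n) → ℝ)
    (hv : ContDiffOn ℝ 1 v (DInf n k r))
    (hharm : IsPHarmonic n p (DInf n k r) v)
    (hfin : ∀ t, r < t → BddAbove (v '' SigmaK n k t))
    (hbdd : IsBoundedUnder (· ≤ ·)
      ((nhdsSet (SigmaK n k r)) ⊓ Filter.principal (DInf n k r)) v)
    (hcobdd : IsCoboundedUnder (· ≤ ·)
      ((nhdsSet (SigmaK n k r)) ⊓ Filter.principal (DInf n k r)) v)
    (hM : Mfun n k r v r < Mfun n k r v R)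
    (hint : ∫⁻ x in DInf n k r, ENNReal.ofReal (Gfun n k p r R v x) < ⊤) :
    ∀ t ∈ Set.Ioo r R,
      Mfun n k r v t ≤ (Mfun n k r v R - Mfun n k r v r) * u0 k p r R t + Mfun n k r v r := by
  have hint' : IntegrableOn (Gfun n k p r R v) (DInf n k r) :=
    integrableOn_comparisonWeight_of_lintegral_lt_top isOpen_DInf
      ((hv.sub contDiffOn_const).div_const _)
      ((contDiffOn_uComp hr).mono fun _ => headProj_ne_zero_of_mem_DInf hr) hint
  have v_le : ∀ x ∈ shell n k r R, v x ≤
      (Mfun n k r v R - Mfun n k r v r) * u0 k p r R (dk n k x) + Mfun n k r v r :=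
    stmt_3_general hkn hp hr hrR hM (hv.mono shell_subset_DInf) (hharm.mono shell_subset_DInf)
      (fun y hy c hc => (eventually_lt_of_Mfun_self_lt hbdd hy hc).filter_mono
        (nhdsWithin_mono y shell_subset_DInf))
      (fun y hy c hc => (eventually_lt_of_Mfun_lt hrR hv.continuousOn (hfin R hrR) hy
        hc).filter_mono (nhdsWithin_mono y shell_subset_DInf))
      (hint'.mono_set shell_subset_DInf)
  rintro t ⟨hrt, htR⟩
  refine Mfun_le hrt.ne' (SigmaK_nonempty hk1 hkn (hr.trans hrt).le) ?_
  rintro x rfl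
  exact v_le x ⟨hrt, htR⟩
end

section
/- Let 1 < p < ∞, r > 0 and fix an integer 1 ≤ k ≤ n. Then the function u(x) = ∫_r^{d_k(x)} s^{(1−k)/(p−1)} ds, defined for x ∈ ℝⁿ with d_k(x) > r, is twice continuously differentiable there and satisfies the p-Laplace equation pointwise: ∑_{i=1}^n ∂/∂x_i ( u_{x_i}(x) · |∇u(x)|^{p−2} ) = 0, where u_{x_i} = ∂u/∂x_i and |∇u| is the Euclidean norm of the gradient of u. In fact |∇u(x)|^{p−2}∇u(x) is the vector field whose i-th component equals x_i · d_k(x)^{−k} for 1 ≤ i ≤ k and 0 for k < i ≤ n, and this vector field is divergence-free on {x : d_k(x) > r}. -/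
/-!
Let `P` be the orthogonal projection onto a `k`-dimensional subspace; `d_k` is `‖P ·‖` for the span
of the first `k` coordinate axes. A function `φ(‖P x‖)` has gradient `φ'(‖P x‖) P x / ‖P x‖`, so
for `φ'(s) = s ^ a` the flux `|∇u|^{p-2} ∇u` is `‖P x‖ ^ (a (p - 1) - 1) P x`. As
`div P = tr P = k`, the product rule gives `div (‖P x‖ ^ b P x) = (k + b) ‖P x‖ ^ b`, which vanishes
exactly for `b = -k`, that is, for `a = (1 - k) / (p - 1)`.
-/

open Filter LinearMap Module Set Topology
open scoped ContDiff Gradient RealInnerProductSpace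

section Divergence

variable {E : Type*} [NormedAddCommGroup E] [InnerProductSpace ℝ E]

/-- The divergence of a vector field `V` at `x`, encoded without coordinates as the trace of the
derivative of `V`; it is `0` where `V` is not differentiable, and everywhere if `E` has infinite
dimension. -/
noncomputable def divergence (V : E → E) (x : E) : ℝ :=
  trace ℝ E (fderiv ℝ V x)

lemma divergence_eq_sum_fderiv_inner {ι : Type*} [Fintype ι] (b : OrthonormalBasis ι ℝ E)
    {V : E → E} {x : E} (hV : DifferentiableAt ℝ V x) :
    divergence V x = ∑ i, fderiv ℝ (fun y => ⟪b i, V y⟫) x (b i) := by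
  rw [divergence, trace_eq_sum_inner _ b]
  refine Finset.sum_congr rfl fun i _ => ?_
  rw [fderiv_inner_apply ℝ (differentiableAt_const _) hV]
  simp

lemma divergence_smul [CompleteSpace E] [FiniteDimensional ℝ E] {f : E → ℝ} {g x : E} {V : E → E}
    (hf : HasGradientAt f g x) (hV : DifferentiableAt ℝ V x) :
    divergence (fun y => f y • V y) x = f x * divergence V x + ⟪g, V x⟫ := by
  have h : HasFDerivAt (fun y => f y • V y) _ x := hf.hasFDerivAt.smul hV.hasFDerivAt
  rw [divergence, h.fderiv]
  simp [divergence, trace_smulRight]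

lemma trace_starProjection [FiniteDimensional ℝ E] (K : Submodule ℝ E) [K.HasOrthogonalProjection] :
    trace ℝ E K.starProjection = finrank ℝ K :=
  IsProj.trace ⟨K.starProjection_apply_mem, fun _ => K.starProjection_eq_self_iff.mpr⟩

lemma divergence_starProjection [FiniteDimensional ℝ E] (K : Submodule ℝ E)
    [K.HasOrthogonalProjection] (x : E) :
    divergence K.starProjection x = finrank ℝ K := by
  rw [divergence, ContinuousLinearMap.fderiv, trace_starProjection]

end Divergence

section Radial

variable {E : Type*} [NormedAddCommGroup E] [InnerProductSpace ℝ E]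

lemma differentiableAt_norm_rpow_smul_starProjection (K : Submodule ℝ E)
    [K.HasOrthogonalProjection] (a : ℝ) {x : E} (hx : K.starProjection x ≠ 0) :
    DifferentiableAt ℝ (fun y => ‖K.starProjection y‖ ^ a • K.starProjection y) x :=
  ((K.starProjection.differentiableAt.norm ℝ hx).rpow_const (.inl (norm_ne_zero_iff.mpr hx))).smul
    K.starProjection.differentiableAt

variable [CompleteSpace E]

lemma hasGradientAt_norm {v : E} (hv : v ≠ 0) :
    HasGradientAt (fun w : E => ‖w‖) (‖v‖⁻¹ • v) v := by
  have h := (hasStrictFDerivAt_norm_sq v).hasFDerivAt.sqrt (by positivity)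
  simp only [Real.sqrt_sq (norm_nonneg _)] at h
  refine h.congr_fderiv ?_
  ext w
  simp only [one_div, mul_inv_rev, _root_.smul_apply, coe_innerSL_apply, nsmul_eq_mul,
    Nat.cast_ofNat, smul_eq_mul, map_smul, InnerProductSpace.toDual_apply_apply]
  field_simp

variable (K : Submodule ℝ E) [K.HasOrthogonalProjection] {φ : ℝ → ℝ} {φ' : ℝ} {x : E}

lemma hasGradientAt_comp_norm_starProjection (hx : K.starProjection x ≠ 0)
    (hφ : HasDerivAt φ φ' ‖K.starProjection x‖) :
    HasGradientAt (fun y => φ ‖K.starProjection y‖)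
      ((φ' * ‖K.starProjection x‖⁻¹) • K.starProjection x) x := by
  have h := hφ.comp_hasFDerivAt x
    ((hasGradientAt_norm hx).hasFDerivAt.comp x K.starProjection.hasFDerivAt)
  refine h.congr_fderiv ?_
  ext y
  simp [mul_assoc, ← K.inner_starProjection_left_eq_right,
    K.starProjection_eq_self_iff.mpr (K.starProjection_apply_mem x)]

lemma divergence_comp_norm_smul_starProjection [FiniteDimensional ℝ E]
    (hx : K.starProjection x ≠ 0) (hφ : HasDerivAt φ φ' ‖K.starProjection x‖) :
    divergence (fun y => φ ‖K.starProjection y‖ • K.starProjection y) x =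
      finrank ℝ K * φ ‖K.starProjection x‖ + φ' * ‖K.starProjection x‖ := by
  have hnorm : ‖K.starProjection x‖ ≠ 0 := norm_ne_zero_iff.mpr hx
  rw [divergence_smul (hasGradientAt_comp_norm_starProjection K hx hφ)
    K.starProjection.differentiableAt, divergence_starProjection, real_inner_smul_left,
    real_inner_self_eq_norm_sq, sq, mul_assoc, inv_mul_cancel_left₀ hnorm, mul_comm]

lemma divergence_norm_rpow_smul_starProjection [FiniteDimensional ℝ E] (a : ℝ)
    (hx : K.starProjection x ≠ 0) :
    divergence (fun y => ‖K.starProjection y‖ ^ a • K.starProjection y) x =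
      (finrank ℝ K + a) * ‖K.starProjection x‖ ^ a := by
  have hnorm : ‖K.starProjection x‖ ≠ 0 := norm_ne_zero_iff.mpr hx
  rw [divergence_comp_norm_smul_starProjection K hx (Real.hasDerivAt_rpow_const (.inl hnorm)),
    mul_assoc, ← Real.rpow_add_one hnorm, sub_add_cancel, add_mul]

end Radial

lemma norm_rpow_smul_rpow_smul {E : Type*} [NormedAddCommGroup E] [NormedSpace ℝ E] (a q : ℝ)
    (v : E) :
    ‖‖v‖ ^ a • v‖ ^ q • ‖v‖ ^ a • v = ‖v‖ ^ ((a + 1) * q + a) • v := by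
  obtain rfl | hv := eq_or_ne v 0
  · simp
  have hpos : 0 < ‖v‖ := norm_pos_iff.mpr hv
  rw [norm_smul, Real.norm_of_nonneg (by positivity), ← Real.rpow_add_one hpos.ne',
    ← Real.rpow_mul hpos.le, smul_smul, ← Real.rpow_add hpos]

section IntegralRpow

variable {r : ℝ} (a : ℝ)

lemma hasDerivAt_integral_rpow {t : ℝ} (hr : 0 < r) (ht : 0 < t) :
    HasDerivAt (fun t => ∫ s in r..t, s ^ a) (t ^ a) t := by
  have hcont : ContinuousOn (fun s : ℝ => s ^ a) (Ioi 0) := fun s hs =>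
    (Real.continuousAt_rpow_const s a (.inl (ne_of_gt hs))).continuousWithinAt
  exact intervalIntegral.integral_hasDerivAt_right
    (intervalIntegral.intervalIntegrable_rpow (.inr (notMem_uIcc_of_lt hr ht)))
    (hcont.stronglyMeasurableAtFilter isOpen_Ioi t ht)
    (Real.continuousAt_rpow_const t a (.inl ht.ne'))

lemma contDiffOn_integral_rpow (hr : 0 < r) :
    ContDiffOn ℝ ∞ (fun t => ∫ s in r..t, s ^ a) (Ioi 0) := by
  have hderiv (t : ℝ) (ht : t ∈ Ioi 0) := hasDerivAt_integral_rpow a hr ht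
  refine (contDiffOn_infty_iff_deriv_of_isOpen isOpen_Ioi).mpr
    ⟨fun t ht => (hderiv t ht).differentiableAt.differentiableWithinAt, ?_⟩
  exact ContDiffOn.congr
    (fun t ht => (Real.contDiffAt_rpow_const_of_ne (ne_of_gt ht)).contDiffWithinAt)
    fun t ht => (hderiv t ht).deriv

variable {E : Type*} [NormedAddCommGroup E] [InnerProductSpace ℝ E] (K : Submodule ℝ E)
  [K.HasOrthogonalProjection]

lemma contDiffOn_integral_rpow_norm_starProjection (hr : 0 < r) :
    ContDiffOn ℝ ∞ (fun x => ∫ s in r..‖K.starProjection x‖, s ^ a)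
      {x | K.starProjection x ≠ 0} :=
  (contDiffOn_integral_rpow a hr).comp
    (K.starProjection.contDiff.contDiffOn.norm ℝ fun _ hx => hx) fun _ hx => norm_pos_iff.mpr hx

variable [CompleteSpace E] {x : E}

lemma hasGradientAt_integral_rpow_norm_starProjection (hr : 0 < r)
    (hx : K.starProjection x ≠ 0) :
    HasGradientAt (fun y => ∫ s in r..‖K.starProjection y‖, s ^ a)
      (‖K.starProjection x‖ ^ (a - 1) • K.starProjection x) x := by
  have hpos : 0 < ‖K.starProjection x‖ := norm_pos_iff.mpr hx
  rw [Real.rpow_sub_one hpos.ne', div_eq_mul_inv]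
  exact hasGradientAt_comp_norm_starProjection K hx (hasDerivAt_integral_rpow a hr hpos)

lemma norm_gradient_rpow_smul_gradient_integral_rpow (p : ℝ) (hr : 0 < r)
    (hx : K.starProjection x ≠ 0) {u : E → ℝ}
    (hu : u = fun y => ∫ s in r..‖K.starProjection y‖, s ^ a) :
    ‖∇ u x‖ ^ (p - 2) • ∇ u x =
      ‖K.starProjection x‖ ^ (a * (p - 1) - 1) • K.starProjection x := by
  rw [hu, (hasGradientAt_integral_rpow_norm_starProjection a K hr hx).gradient,
    norm_rpow_smul_rpow_smul]
  ring_nf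

end IntegralRpow

theorem stmt_4_general {E ι : Type*} [NormedAddCommGroup E] [InnerProductSpace ℝ E]
    [CompleteSpace E] [Fintype ι] (b : OrthonormalBasis ι ℝ E) (K : Submodule ℝ E)
    [K.HasOrthogonalProjection] {p r : ℝ} (hp : p ≠ 1) (hr : 0 < r) {u : E → ℝ}
    (hu : ∀ x, u x = ∫ s in r..‖K.starProjection x‖, s ^ ((1 - (finrank ℝ K : ℝ)) / (p - 1)))
    {V : E → E} (hV : ∀ x, V x = ‖K.starProjection x‖ ^ (-finrank ℝ K : ℝ) • K.starProjection x) :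
    ContDiffOn ℝ ∞ u {x | K.starProjection x ≠ 0} ∧
    (∀ x, K.starProjection x ≠ 0 → ‖∇ u x‖ ^ (p - 2) • ∇ u x = V x) ∧
    (∀ x, K.starProjection x ≠ 0 → ∑ i, fderiv ℝ (fun y => ⟪b i, V y⟫) x (b i) = 0) ∧
    (∀ x, K.starProjection x ≠ 0 →
      ∑ i, fderiv ℝ (fun y => fderiv ℝ u y (b i) * ‖∇ u y‖ ^ (p - 2)) x (b i) = 0) := by
  have : FiniteDimensional ℝ E := b.toBasis.finiteDimensional_of_finite
  have hflux (x : E) (hx : K.starProjection x ≠ 0) : ‖∇ u x‖ ^ (p - 2) • ∇ u x = V x := by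
    rw [norm_gradient_rpow_smul_gradient_integral_rpow _ K p hr hx (funext hu), hV,
      div_mul_cancel₀ _ (sub_ne_zero.mpr hp), sub_sub_cancel_left]
  have hdiv (x : E) (hx : K.starProjection x ≠ 0) :
      ∑ i, fderiv ℝ (fun y => ⟪b i, V y⟫) x (b i) = 0 := by
    rw [funext hV, ← divergence_eq_sum_fderiv_inner b
      (differentiableAt_norm_rpow_smul_starProjection K _ hx),
      divergence_norm_rpow_smul_starProjection K _ hx, add_neg_cancel, zero_mul]
  refine ⟨funext hu ▸ contDiffOn_integral_rpow_norm_starProjection _ K hr, hflux, hdiv,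
    fun x hx => ?_⟩
  rw [← hdiv x hx]
  refine Finset.sum_congr rfl fun i _ => ?_
  have hflux_near : (fun y => fderiv ℝ u y (b i) * ‖∇ u y‖ ^ (p - 2)) =ᶠ[𝓝 x]
      fun y => ⟪b i, V y⟫ := by
    filter_upwards [K.starProjection.continuous.continuousAt.eventually_ne hx] with y hy
    simp [← hflux y hy, inner_smul_right, mul_comm]
  rw [hflux_near.fderiv_eq]

section CoordinateSubspace

variable {ι : Type*}

/-- The subspace of `ℝ^ι` spanned by the coordinate axes with index in `s`, encoded by the
vanishing of the other coordinates. -/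
def coordinateSubspace (s : Finset ι) : Submodule ℝ (EuclideanSpace ℝ ι) where
  carrier := {x | ∀ i ∉ s, x i = 0}
  zero_mem' := by simp
  add_mem' hx hy i hi := by simp [hx i hi, hy i hi]
  smul_mem' c x hx i hi := by simp [hx i hi]

variable (s : Finset ι)

lemma starProjection_coordinateSubspace_apply [Fintype ι] [DecidableEq ι]
    (x : EuclideanSpace ℝ ι) (i : ι) :
    (coordinateSubspace s).starProjection x i = if i ∈ s then x i else 0 := by
  have hproj : (coordinateSubspace s).starProjection x =
      WithLp.toLp 2 fun i => if i ∈ s then x i else 0 := by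
    refine Submodule.eq_starProjection_of_mem_of_inner_eq_zero (fun i hi => by simp [hi])
      fun y hy => ?_
    rw [PiLp.inner_apply]
    refine Finset.sum_eq_zero fun i _ => ?_
    by_cases hi : i ∈ s
    · simp [hi]
    · simp [hy i hi]
  rw [hproj]

lemma norm_starProjection_coordinateSubspace [Fintype ι] (x : EuclideanSpace ℝ ι) :
    ‖(coordinateSubspace s).starProjection x‖ = √(∑ i ∈ s, x i ^ 2) := by
  classical
  simp [EuclideanSpace.norm_eq, starProjection_coordinateSubspace_apply, ite_pow]

lemma finrank_coordinateSubspace [Finite ι] :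
    finrank ℝ (coordinateSubspace s) = s.card := by
  classical
  cases nonempty_fintype ι
  have htrace : (finrank ℝ (coordinateSubspace s) : ℝ) = s.card := by
    rw [← trace_starProjection, trace_eq_sum_inner _ (EuclideanSpace.basisFun ι ℝ)]
    simp [EuclideanSpace.inner_single_left, starProjection_coordinateSubspace_apply]
  exact_mod_cast htrace

lemma dk_eq_norm_starProjection (n k : ℕ) (x : EuclideanSpace ℝ (Fin n)) :
    dk n k x = ‖(coordinateSubspace {i : Fin n | (i : ℕ) < k}).starProjection x‖ := by
  rw [norm_starProjection_coordinateSubspace, dk]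

lemma finrank_coordinateSubspace_val_lt {n k : ℕ} (hkn : k ≤ n) :
    finrank ℝ (coordinateSubspace {i : Fin n | (i : ℕ) < k}) = k := by
  rw [finrank_coordinateSubspace, Fin.card_filter_val_lt, min_eq_right hkn]

end CoordinateSubspace

/-- The function `u(x) = ∫_r^{d_k(x)} s^{(1-k)/(p-1)} ds` is `C²` on `{d_k > r}` and is a
pointwise solution of the `p`-Laplace equation there; moreover `|∇u|^{p-2}∇u` is the
vector field `V` with `V_i(x) = x_i d_k(x)^{-k}` for `i < k` and `0` otherwise, and `V` is
divergence free on `{d_k > r}`. -/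
theorem stmt_4 (n k : ℕ) (hk1 : 1 ≤ k) (hkn : k ≤ n) (p r : ℝ) (hp : 1 < p) (hr : 0 < r)
    (u : EuclideanSpace ℝ (Fin n) → ℝ)
    (hu : ∀ x, u x = ∫ s in r..(dk n k x), s ^ ((1 - (k : ℝ)) / (p - 1)))
    (V : EuclideanSpace ℝ (Fin n) → EuclideanSpace ℝ (Fin n))
    (hV : ∀ x i, V x i = if (i : ℕ) < k then x i * (dk n k x) ^ (-(k : ℝ)) else 0) :
    ContDiffOn ℝ 2 u {x | r < dk n k x} ∧
    (∀ x, r < dk n k x → (‖gradient u x‖ ^ (p - 2)) • gradient u x = V x) ∧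
    (∀ x, r < dk n k x →
      ∑ i : Fin n, fderiv ℝ (fun y => V y i) x (EuclideanSpace.single i 1) = 0) ∧
    (∀ x, r < dk n k x →
      ∑ i : Fin n, fderiv ℝ
        (fun y => fderiv ℝ u y (EuclideanSpace.single i 1) * ‖gradient u y‖ ^ (p - 2))
        x (EuclideanSpace.single i 1) = 0) := by
  let K := coordinateSubspace {i : Fin n | (i : ℕ) < k}
  have hfinrank : finrank ℝ K = k := finrank_coordinateSubspace_val_lt hkn
  have hne (x : EuclideanSpace ℝ (Fin n)) (hx : r < dk n k x) : K.starProjection x ≠ 0 :=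
    norm_pos_iff.mp (dk_eq_norm_starProjection n k x ▸ hr.trans hx)
  have hV' (x : EuclideanSpace ℝ (Fin n)) :
      V x = ‖K.starProjection x‖ ^ (-finrank ℝ K : ℝ) • K.starProjection x := by
    ext i
    simp [K, hV, hfinrank, dk_eq_norm_starProjection, starProjection_coordinateSubspace_apply,
      mul_comm]
  obtain ⟨hcontDiff, hflux, hdiv, hpLaplace⟩ := stmt_4_general (EuclideanSpace.basisFun (Fin n) ℝ)
    K hp.ne' hr (u := u) (fun x => by rw [hu, dk_eq_norm_starProjection, hfinrank]) hV'
  refine ⟨(contDiffOn_infty.mp hcontDiff 2).mono hne, fun x hx => hflux x (hne x hx),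
    fun x hx => ?_, fun x hx => ?_⟩
  · simpa [EuclideanSpace.inner_single_left] using hdiv x (hne x hx)
  · simpa using hpLaplace x (hne x hx)
end

section
/- Let p > 1 and a > b > 0. Then C1 · (a^{p−1} − b^{p−1})/(a − b) ≤ (a^{p−1} + b^{p−1})/(a + b) ≤ C2 · (a^{p−1} − b^{p−1})/(a − b), where C1 = min{1, 1/(p−1)} and C2 = max{1, 1/(p−1)}. -/
/-!
With `t = (log a - log b) / 2`, the quotient `(a ^ s - b ^ s) / (a ^ s + b ^ s)` is `tanh (s * t)`,
so the theorem compares `tanh t` with `tanh ((p - 1) * t)`. As `tanh` is increasing, concave and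
nonnegative on `[0, ∞)`, it satisfies `tanh x ≤ max 1 (x / y) * tanh y`; the two choices of which
argument is `t` give the two bounds.
-/

open Real

theorem min_inv_inv_of_pos {G₀ : Type*} [GroupWithZero G₀] [LinearOrder G₀] [PosMulReflectLT G₀]
    [MulPosReflectLT G₀] {a b : G₀} (ha : 0 < a) (hb : 0 < b) :
    min a⁻¹ b⁻¹ = (max a b)⁻¹ :=
  (AntitoneOn.map_max (s := Set.Ioi 0) (fun _ hx _ _ hxy => inv_anti₀ hx hxy) ha hb).symm

theorem smul_le_map_smul_of_concaveOn {𝕜 E β : Type*} [Ring 𝕜] [PartialOrder 𝕜]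
    [IsOrderedAddMonoid 𝕜] [AddCommMonoid E] [Module 𝕜 E] [AddCommMonoid β] [PartialOrder β]
    [IsOrderedAddMonoid β] [Module 𝕜 β] [PosSMulMono 𝕜 β]
    {s : Set E} {f : E → β} (hf : ConcaveOn 𝕜 s f)
    (h0 : 0 ∈ s) (hf0 : 0 ≤ f 0) {x : E} (hx : x ∈ s) {c : 𝕜} (hc0 : 0 ≤ c) (hc1 : c ≤ 1) :
    c • f x ≤ f (c • x) := by
  have hc : 0 ≤ 1 - c := sub_nonneg.2 hc1
  calc c • f x ≤ c • f x + (1 - c) • f 0 := le_add_of_nonneg_right (smul_nonneg hc hf0)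
    _ ≤ f (c • x + (1 - c) • 0) := hf.2 hx h0 hc0 hc (add_sub_cancel c 1)
    _ = f (c • x) := by rw [smul_zero, add_zero]

theorem map_le_max_one_div_mul_map_of_concaveOn {𝕜 : Type*} [Field 𝕜] [LinearOrder 𝕜]
    [IsStrictOrderedRing 𝕜] {f : 𝕜 → 𝕜} (hconc : ConcaveOn 𝕜 (Set.Ici 0) f)
    (hmono : MonotoneOn f (Set.Ici 0))
    (hf0 : 0 ≤ f 0) {x y : 𝕜} (hx : 0 ≤ x) (hy : 0 < y) :
    f x ≤ max 1 (x / y) * f y := by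
  rcases le_total x y with hxy | hyx
  · rw [max_eq_left ((div_le_one hy).2 hxy), one_mul]
    exact hmono hx hy.le hxy
  · have hx_pos : 0 < x := hy.trans_le hyx
    have hscale : y / x * f x ≤ f y := by
      simpa only [smul_eq_mul, div_mul_cancel₀ y hx_pos.ne'] using
        smul_le_map_smul_of_concaveOn hconc Set.self_mem_Ici hf0 hx
          (div_nonneg hy.le hx) ((div_le_one hx_pos).2 hyx)
    rwa [max_eq_right ((one_le_div hy).2 hyx), ← inv_div y x,
      le_inv_mul_iff₀ (div_pos hy hx_pos)]

theorem hasDerivAt_tanh (x : ℝ) : HasDerivAt tanh (1 - tanh x ^ 2) x := by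
  have hcosh : cosh x ≠ 0 := (cosh_pos x).ne'
  rw [funext tanh_eq_sinh_div_cosh]
  refine ((hasDerivAt_sinh x).div (hasDerivAt_cosh x) hcosh).congr_deriv ?_
  field_simp

theorem monotone_tanh : Monotone tanh :=
  monotone_of_hasDerivAt_nonneg hasDerivAt_tanh fun x => sub_nonneg.2 (tanh_sq_lt_one x).le

theorem tanh_nonneg {x : ℝ} (hx : 0 ≤ x) : 0 ≤ tanh x :=
  tanh_zero ▸ monotone_tanh hx

theorem concaveOn_tanh_Ici : ConcaveOn ℝ (Set.Ici 0) tanh := by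
  have hdiff : Differentiable ℝ tanh := fun x => (hasDerivAt_tanh x).differentiableAt
  have hderiv : deriv tanh = fun x => 1 - tanh x ^ 2 := funext fun x => (hasDerivAt_tanh x).deriv
  refine AntitoneOn.concaveOn_of_deriv (convex_Ici 0) hdiff.continuous.continuousOn
    hdiff.differentiableOn ?_
  rw [hderiv, interior_Ici]
  intro x (hx : 0 < x) y _ hxy
  exact sub_le_sub_left (pow_le_pow_left₀ (tanh_nonneg hx.le) (monotone_tanh hxy) 2) 1

theorem rpow_sub_div_rpow_add_eq_tanh {a b : ℝ} (ha : 0 < a) (hb : 0 < b) (s : ℝ) :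
    (a ^ s - b ^ s) / (a ^ s + b ^ s) = tanh (s * ((log a - log b) / 2)) := by
  set m := s * ((log a + log b) / 2) with hm
  set u := s * ((log a - log b) / 2) with hu
  have hlog_a : log a * s = m + u := by rw [hm, hu]; ring
  have hlog_b : log b * s = m + -u := by rw [hm, hu]; ring
  rw [rpow_def_of_pos ha, rpow_def_of_pos hb, hlog_a, hlog_b, exp_add, exp_add, ← mul_sub,
    ← mul_add, mul_div_mul_left _ _ (exp_pos m).ne', tanh_eq]

theorem rpow_sub_div_rpow_add_le_max_mul {a b r s : ℝ} (hb : 0 < b) (hba : b < a) (hr : 0 ≤ r)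
    (hs : 0 < s) :
    (a ^ r - b ^ r) / (a ^ r + b ^ r) ≤
      max 1 (r / s) * ((a ^ s - b ^ s) / (a ^ s + b ^ s)) := by
  have ha : 0 < a := hb.trans hba
  have ht : 0 < (log a - log b) / 2 := half_pos (sub_pos.2 (log_lt_log hb hba))
  rw [rpow_sub_div_rpow_add_eq_tanh ha hb, rpow_sub_div_rpow_add_eq_tanh ha hb,
    ← mul_div_mul_right r s ht.ne']
  exact map_le_max_one_div_mul_map_of_concaveOn concaveOn_tanh_Ici (monotone_tanh.monotoneOn _)
    tanh_zero.ge (mul_nonneg hr ht.le) (mul_pos hs ht)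

/-- Lemma (eq19): for `p > 1` and `a > b > 0`,
`C1 * (a^(p-1) - b^(p-1))/(a-b) ≤ (a^(p-1)+b^(p-1))/(a+b) ≤ C2 * (a^(p-1)-b^(p-1))/(a-b)`
with `C1 = min 1 (1/(p-1))` and `C2 = max 1 (1/(p-1))`. -/
theorem stmt_5 (p a b : ℝ) (hp : 1 < p) (hb : 0 < b) (hba : b < a) :
    min 1 (1 / (p - 1)) * ((a ^ (p - 1) - b ^ (p - 1)) / (a - b))
      ≤ (a ^ (p - 1) + b ^ (p - 1)) / (a + b) ∧
    (a ^ (p - 1) + b ^ (p - 1)) / (a + b)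
      ≤ max 1 (1 / (p - 1)) * ((a ^ (p - 1) - b ^ (p - 1)) / (a - b)) := by
  have hs : 0 < p - 1 := sub_pos.2 hp
  have ha : 0 < a := hb.trans hba
  have hadd : 0 < a + b := add_pos ha hb
  have hsub : 0 < a - b := sub_pos.2 hba
  have hrpow_add : 0 < a ^ (p - 1) + b ^ (p - 1) := by positivity
  have hmin : min 1 (1 / (p - 1)) = (max 1 (p - 1))⁻¹ := by
    rw [← min_inv_inv_of_pos one_pos hs, inv_one, one_div]
  constructor
  · have h := rpow_sub_div_rpow_add_le_max_mul hb hba hs.le one_pos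
    rw [rpow_one, rpow_one, div_one, div_le_iff₀ hrpow_add] at h
    rw [hmin, inv_mul_le_iff₀ (by positivity), div_le_iff₀ hsub]
    exact h.trans_eq (by ring)
  · have h := rpow_sub_div_rpow_add_le_max_mul hb hba zero_le_one hs
    rw [rpow_one, rpow_one, ← mul_div_assoc, div_le_div_iff₀ hadd hrpow_add] at h
    rw [← mul_div_assoc, div_le_div_iff₀ hadd hsub, mul_comm]
    exact h
end

section
/- Let p ≥ 2 and a > b > 0. Then C3 · (a^{p−2} + b^{p−2}) ≤ (a^{p−1} − b^{p−1})/(a − b) ≤ C4 · (a^{p−2} + b^{p−2}), where C3 = min{(p−1)/2, 1} and C4 = max{(p−1)/2, 1}. -/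
/-!
Write `q = p - 2`. The difference quotient of `t ^ (q + 1)` is `q + 1` times the mean of `t ^ q`
over `[b, a]`, and the Hermite–Hadamard inequality compares this mean with `(a ^ q + b ^ q) / 2`;
this is the bound with constant `(p - 1) / 2`, an upper one in the convex range `1 ≤ q` and a
lower one in the concave range `0 ≤ q ≤ 1`. The bound with constant `1` comes from
`a ^ (q + 1) - b ^ (q + 1) = (a - b) * (a ^ q + b ^ q) + a * b * (a ^ (q - 1) - b ^ (q - 1))`,
whose last term is nonnegative for `1 ≤ q` and nonpositive for `q ≤ 1`.
-/

open MeasureTheory Set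

section HermiteHadamard

variable {f : ℝ → ℝ} {a b : ℝ}

lemma add_reflect_le_of_convexOn {x : ℝ} (hf : ConvexOn ℝ (Icc a b) f) (hx : x ∈ Icc a b) :
    f x + f (a + b - x) ≤ f a + f b := by
  have hab : a ≤ b := hx.1.trans hx.2
  obtain ⟨s, t, hs, ht, hst, rfl⟩ : x ∈ segment ℝ a b := by rwa [segment_eq_Icc hab]
  have hreflect : a + b - (s • a + t • b) = t • a + s • b := by
    simp only [smul_eq_mul]
    linear_combination -(a + b) * hst
  have hleft := hf.2 (left_mem_Icc.2 hab) (right_mem_Icc.2 hab) hs ht hst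
  have hright := hf.2 (left_mem_Icc.2 hab) (right_mem_Icc.2 hab) ht hs (by rwa [add_comm])
  rw [hreflect]
  calc f (s • a + t • b) + f (t • a + s • b)
      ≤ (s • f a + t • f b) + (t • f a + s • f b) := add_le_add hleft hright
    _ = f a + f b := by
      simp only [smul_eq_mul]
      linear_combination (f a + f b) * hst

theorem integral_le_trapezoid_of_convexOn (hab : a ≤ b) (hf : ConvexOn ℝ (Icc a b) f)
    (hint : IntervalIntegrable f volume a b) :
    ∫ x in a..b, f x ≤ (b - a) * ((f a + f b) / 2) := by
  have hint_reflect : IntervalIntegrable (fun x ↦ f (a + b - x)) volume a b := by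
    simpa using (hint.comp_sub_left (a + b)).symm
  have hreflect : ∫ x in a..b, f (a + b - x) = ∫ x in a..b, f x := by simp
  have hsum : ∫ x in a..b, (f x + f (a + b - x)) ≤ ∫ _ in a..b, (f a + f b) :=
    intervalIntegral.integral_mono_on hab (hint.add hint_reflect) intervalIntegrable_const
      fun x hx ↦ add_reflect_le_of_convexOn hf hx
  rw [intervalIntegral.integral_add hint hint_reflect, hreflect,
    intervalIntegral.integral_const, smul_eq_mul] at hsum
  linarith

theorem trapezoid_le_integral_of_concaveOn (hab : a ≤ b) (hf : ConcaveOn ℝ (Icc a b) f)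
    (hint : IntervalIntegrable f volume a b) :
    (b - a) * ((f a + f b) / 2) ≤ ∫ x in a..b, f x := by
  have h := integral_le_trapezoid_of_convexOn hab hf.neg hint.neg
  simp only [Pi.neg_apply, intervalIntegral.integral_neg] at h
  linarith

end HermiteHadamard

section Rpow

variable {q x y : ℝ}

lemma rpow_add_one_sub_eq_mul_integral (hq : -1 < q) :
    y ^ (q + 1) - x ^ (q + 1) = (q + 1) * ∫ t in x..y, t ^ q := by
  rw [integral_rpow (Or.inl hq), mul_div_cancel₀ _ (by linarith)]

lemma rpow_add_one_sub_le_half_mul (hq : 1 ≤ q) (hx : 0 ≤ x) (hxy : x ≤ y) :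
    y ^ (q + 1) - x ^ (q + 1) ≤ (q + 1) / 2 * (y ^ q + x ^ q) * (y - x) := by
  have hconvex : ConvexOn ℝ (Icc x y) fun t ↦ t ^ q :=
    (convexOn_rpow hq).subset (fun _ ht ↦ hx.trans ht.1) (convex_Icc x y)
  have hmean := integral_le_trapezoid_of_convexOn hxy hconvex
    (intervalIntegral.intervalIntegrable_rpow' (by linarith))
  calc y ^ (q + 1) - x ^ (q + 1) = (q + 1) * ∫ t in x..y, t ^ q :=
        rpow_add_one_sub_eq_mul_integral (by linarith)
    _ ≤ (q + 1) * ((y - x) * ((x ^ q + y ^ q) / 2)) := by gcongr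
    _ = (q + 1) / 2 * (y ^ q + x ^ q) * (y - x) := by ring

lemma half_mul_le_rpow_add_one_sub (hq₀ : 0 ≤ q) (hq₁ : q ≤ 1) (hx : 0 ≤ x) (hxy : x ≤ y) :
    (q + 1) / 2 * (y ^ q + x ^ q) * (y - x) ≤ y ^ (q + 1) - x ^ (q + 1) := by
  have hconcave : ConcaveOn ℝ (Icc x y) fun t ↦ t ^ q :=
    (Real.concaveOn_rpow hq₀ hq₁).subset (fun _ ht ↦ hx.trans ht.1) (convex_Icc x y)
  have hmean := trapezoid_le_integral_of_concaveOn hxy hconcave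
    (intervalIntegral.intervalIntegrable_rpow' (by linarith))
  calc (q + 1) / 2 * (y ^ q + x ^ q) * (y - x)
      = (q + 1) * ((y - x) * ((x ^ q + y ^ q) / 2)) := by ring
    _ ≤ (q + 1) * ∫ t in x..y, t ^ q := by gcongr
    _ = y ^ (q + 1) - x ^ (q + 1) := (rpow_add_one_sub_eq_mul_integral (by linarith)).symm

lemma rpow_add_one_sub_eq (hx : x ≠ 0) (hy : y ≠ 0) :
    y ^ (q + 1) - x ^ (q + 1) =
      (y ^ q + x ^ q) * (y - x) + y * x * (y ^ (q - 1) - x ^ (q - 1)) := by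
  rw [Real.rpow_add_one hx, Real.rpow_add_one hy, Real.rpow_sub_one hx, Real.rpow_sub_one hy]
  field_simp
  ring

lemma mul_le_rpow_add_one_sub (hq : 1 ≤ q) (hx : 0 < x) (hxy : x ≤ y) :
    (y ^ q + x ^ q) * (y - x) ≤ y ^ (q + 1) - x ^ (q + 1) := by
  have hy : 0 < y := hx.trans_le hxy
  have hmono : x ^ (q - 1) ≤ y ^ (q - 1) := Real.rpow_le_rpow hx.le hxy (sub_nonneg.2 hq)
  rw [rpow_add_one_sub_eq hx.ne' hy.ne']
  exact le_add_of_nonneg_right (mul_nonneg (by positivity) (sub_nonneg.2 hmono))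

lemma rpow_add_one_sub_le_mul (hq : q ≤ 1) (hx : 0 < x) (hxy : x ≤ y) :
    y ^ (q + 1) - x ^ (q + 1) ≤ (y ^ q + x ^ q) * (y - x) := by
  have hy : 0 < y := hx.trans_le hxy
  have hanti : y ^ (q - 1) ≤ x ^ (q - 1) :=
    Real.rpow_le_rpow_of_nonpos hx hxy (sub_nonpos.2 hq)
  rw [rpow_add_one_sub_eq hx.ne' hy.ne']
  exact add_le_of_nonpos_right
    (mul_nonpos_of_nonneg_of_nonpos (by positivity) (sub_nonpos.2 hanti))

end Rpow

/-- Lemma (eq20): for `p ≥ 2` and `a > b > 0`,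
`C3 * (a^(p-2)+b^(p-2)) ≤ (a^(p-1)-b^(p-1))/(a-b) ≤ C4 * (a^(p-2)+b^(p-2))`
with `C3 = min ((p-1)/2) 1` and `C4 = max ((p-1)/2) 1`. -/
theorem stmt_6 (p a b : ℝ) (hp : 2 ≤ p) (hb : 0 < b) (hba : b < a) :
    min ((p - 1) / 2) 1 * (a ^ (p - 2) + b ^ (p - 2))
      ≤ (a ^ (p - 1) - b ^ (p - 1)) / (a - b) ∧
    (a ^ (p - 1) - b ^ (p - 1)) / (a - b)
      ≤ max ((p - 1) / 2) 1 * (a ^ (p - 2) + b ^ (p - 2)) := by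
  obtain ⟨q, rfl⟩ : ∃ q, p = q + 2 := ⟨p - 2, by ring⟩
  rw [show q + 2 - 1 = q + 1 by ring, add_sub_cancel_right, le_div_iff₀ (sub_pos.2 hba),
    div_le_iff₀ (sub_pos.2 hba)]
  rcases le_total 1 q with hq | hq
  · rw [min_eq_right (by linarith), max_eq_left (by linarith), one_mul]
    exact ⟨mul_le_rpow_add_one_sub hq hb hba.le, rpow_add_one_sub_le_half_mul hq hb.le hba.le⟩
  · rw [min_eq_left (by linarith), max_eq_right (by linarith), one_mul]
    exact ⟨half_mul_le_rpow_add_one_sub (by linarith) hq hb.le hba.le,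
      rpow_add_one_sub_le_mul hq hb hba.le⟩
end

section
/- Let 1 < p ≤ 2 and a > b > 0. Then C3 · (a^{2−p} + b^{2−p})^{−1} ≤ (a^{p−1} − b^{p−1})/(a − b) ≤ C4 · (a^{2−p} + b^{2−p})^{−1}, where C3 = min{2(p−1), 1} and C4 = max{2(p−1), 1}. -/
/-!
For `q = p - 1`, multiplying the difference quotient by `a ^ (1 - q) + b ^ (1 - q)` turns the claim
into a comparison of `(a ^ q * b ^ (1 - q) - a ^ (1 - q) * b ^ q) / (a - b)` with `2 * q - 1`
and `0`. With `x = (log a - log b) / 2` this ratio equals `sinh ((2 * q - 1) * x) / sinh x`, which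
is controlled by the convexity of `sinh` on the nonnegative half-line. The ratio is odd under
`q ↦ 1 - q`, so its lower bound is the negated upper bound at `1 - q`.
-/

theorem convexOn_sinh : ConvexOn ℝ (Set.Ici 0) Real.sinh := by
  refine MonotoneOn.convexOn_of_deriv (convex_Ici 0) Real.continuous_sinh.continuousOn
    Real.differentiable_sinh.differentiableOn ?_
  rw [interior_Ici, Real.deriv_sinh]
  exact Real.cosh_strictMonoOn.monotoneOn.mono Set.Ioi_subset_Ici_self

theorem sinh_mul_le_mul_sinh {t x : ℝ} (ht₀ : 0 ≤ t) (ht₁ : t ≤ 1) (hx : 0 ≤ x) :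
    Real.sinh (t * x) ≤ t * Real.sinh x := by
  simpa using convexOn_sinh.2 (Set.mem_Ici.2 hx) Set.self_mem_Ici ht₀
    (sub_nonneg.2 ht₁) (add_sub_cancel t 1)

theorem sinh_mul_le_max_mul_sinh {t x : ℝ} (ht : t ≤ 1) (hx : 0 ≤ x) :
    Real.sinh (t * x) ≤ max t 0 * Real.sinh x := by
  rcases le_total 0 t with ht₀ | ht₀
  · rw [max_eq_left ht₀]
    exact sinh_mul_le_mul_sinh ht₀ ht hx
  · rw [max_eq_right ht₀, zero_mul, Real.sinh_nonpos_iff]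
    exact mul_nonpos_of_nonpos_of_nonneg ht₀ hx

theorem exp_sub_exp_eq_two_mul_exp_mul_sinh (u v : ℝ) :
    Real.exp u - Real.exp v = 2 * Real.exp ((u + v) / 2) * Real.sinh ((u - v) / 2) := by
  have hu : Real.exp u = Real.exp ((u + v) / 2) * Real.exp ((u - v) / 2) := by
    rw [← Real.exp_add]
    ring_nf
  have hv : Real.exp v = Real.exp ((u + v) / 2) * Real.exp (-((u - v) / 2)) := by
    rw [← Real.exp_add]
    ring_nf
  rw [Real.sinh_eq, hu, hv]
  ring

section RpowDifference

variable {a b q : ℝ}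

theorem rpow_mul_rpow_sub_swap_eq_sinh (ha : 0 < a) (hb : 0 < b) :
    a ^ q * b ^ (1 - q) - a ^ (1 - q) * b ^ q =
      2 * Real.exp ((Real.log a + Real.log b) / 2) *
        Real.sinh ((2 * q - 1) * ((Real.log a - Real.log b) / 2)) := by
  simp only [Real.rpow_def_of_pos ha, Real.rpow_def_of_pos hb, ← Real.exp_add]
  rw [exp_sub_exp_eq_two_mul_exp_mul_sinh]
  ring_nf

theorem rpow_mul_rpow_sub_swap_le (hb : 0 < b) (hba : b ≤ a) (hq : q ≤ 1) :
    a ^ q * b ^ (1 - q) - a ^ (1 - q) * b ^ q ≤ max (2 * q - 1) 0 * (a - b) := by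
  have ha : 0 < a := hb.trans_le hba
  have hlog : 0 ≤ (Real.log a - Real.log b) / 2 :=
    div_nonneg (sub_nonneg.2 (Real.log_le_log hb hba)) zero_le_two
  have hsub : a - b = 2 * Real.exp ((Real.log a + Real.log b) / 2) *
      Real.sinh ((Real.log a - Real.log b) / 2) := by
    rw [← exp_sub_exp_eq_two_mul_exp_mul_sinh, Real.exp_log ha, Real.exp_log hb]
  rw [rpow_mul_rpow_sub_swap_eq_sinh ha hb, hsub, mul_left_comm]
  gcongr
  exact sinh_mul_le_max_mul_sinh (by linarith) hlog

theorem rpow_sub_rpow_mul_rpow_one_sub_add_eq (ha : 0 < a) (hb : 0 < b) :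
    (a ^ q - b ^ q) * (a ^ (1 - q) + b ^ (1 - q)) =
      a - b + (a ^ q * b ^ (1 - q) - a ^ (1 - q) * b ^ q) := by
  have rpow_mul_rpow_one_sub {x : ℝ} (hx : 0 < x) : x ^ q * x ^ (1 - q) = x := by
    rw [← Real.rpow_add hx, add_sub_cancel, Real.rpow_one]
  linear_combination rpow_mul_rpow_one_sub ha - rpow_mul_rpow_one_sub hb

theorem rpow_sub_rpow_mul_rpow_one_sub_add_le (hb : 0 < b) (hba : b ≤ a) (hq : q ≤ 1) :
    (a ^ q - b ^ q) * (a ^ (1 - q) + b ^ (1 - q)) ≤ max (2 * q) 1 * (a - b) := by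
  have hmax : max (2 * q) 1 = 1 + max (2 * q - 1) 0 := by
    rw [← max_add_add_left, add_sub_cancel, add_zero]
  rw [rpow_sub_rpow_mul_rpow_one_sub_add_eq (hb.trans_le hba) hb, hmax, add_mul, one_mul]
  gcongr
  exact rpow_mul_rpow_sub_swap_le hb hba hq

theorem min_mul_sub_le_rpow_sub_rpow_mul_rpow_one_sub_add (hb : 0 < b) (hba : b ≤ a) (hq : 0 ≤ q) :
    min (2 * q) 1 * (a - b) ≤ (a ^ q - b ^ q) * (a ^ (1 - q) + b ^ (1 - q)) := by
  have hmin : min (2 * q) 1 = 1 - max (2 * (1 - q) - 1) 0 := by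
    rw [← min_sub_sub_left]
    ring_nf
  have hswap := rpow_mul_rpow_sub_swap_le hb hba (sub_le_self 1 hq)
  rw [sub_sub_cancel] at hswap
  rw [rpow_sub_rpow_mul_rpow_one_sub_add_eq (hb.trans_le hba) hb, hmin, sub_mul, one_mul]
  linarith

end RpowDifference

theorem stmt_7_general {p a b : ℝ} (hb : 0 < b) (hba : b < a) :
    (1 ≤ p → min (2 * (p - 1)) 1 * (a ^ (2 - p) + b ^ (2 - p))⁻¹
      ≤ (a ^ (p - 1) - b ^ (p - 1)) / (a - b)) ∧
    (p ≤ 2 → (a ^ (p - 1) - b ^ (p - 1)) / (a - b)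
      ≤ max (2 * (p - 1)) 1 * (a ^ (2 - p) + b ^ (2 - p))⁻¹) := by
  have ha : 0 < a := hb.trans hba
  have hsub : 0 < a - b := sub_pos.2 hba
  have hsum : 0 < a ^ (2 - p) + b ^ (2 - p) := by positivity
  have hexp : 1 - (p - 1) = 2 - p := by ring
  rw [← div_eq_mul_inv, ← div_eq_mul_inv, div_le_div_iff₀ hsum hsub, div_le_div_iff₀ hsub hsum,
    ← hexp]
  exact ⟨fun hp => min_mul_sub_le_rpow_sub_rpow_mul_rpow_one_sub_add hb hba.le (sub_nonneg.2 hp),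
    fun hp => rpow_sub_rpow_mul_rpow_one_sub_add_le hb hba.le (by linarith)⟩

/-- Lemma (eq20'): for `1 < p ≤ 2` and `a > b > 0`,
`C3 * (a^(2-p)+b^(2-p))⁻¹ ≤ (a^(p-1)-b^(p-1))/(a-b) ≤ C4 * (a^(2-p)+b^(2-p))⁻¹`
with `C3 = min (2*(p-1)) 1` and `C4 = max (2*(p-1)) 1`. -/
theorem stmt_7 (p a b : ℝ) (hp1 : 1 < p) (hp2 : p ≤ 2) (hb : 0 < b) (hba : b < a) :
    min (2 * (p - 1)) 1 * (a ^ (2 - p) + b ^ (2 - p))⁻¹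
      ≤ (a ^ (p - 1) - b ^ (p - 1)) / (a - b) ∧
    (a ^ (p - 1) - b ^ (p - 1)) / (a - b)
      ≤ max (2 * (p - 1)) 1 * (a ^ (2 - p) + b ^ (2 - p))⁻¹ :=
  (stmt_7_general hb hba).imp (· hp1.le) (· hp2)
end

section
/- Let p > 1 and define g1(x) = (x^{p−1} + 1)(x − 1) / ((x^{p−1} − 1)(x + 1)) for x > 1. Then for every x > 1: if 1 < p < 2 then 1 < g1(x) < 1/(p−1); if p = 2 then g1(x) = 1; and if p > 2 then 1/(p−1) < g1(x) < 1. -/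
/-!
Put `q = p - 1` and `t = log x / 2`. Since `(x - 1) / (x + 1) = tanh t`, the quotient of the theorem
is `tanh t / tanh (q * t)`, an even function of `t`, so one may take `t > 0`. For `0 < s < t`,
monotonicity of `tanh` gives `tanh s < tanh t`, and strict concavity of `tanh` on `[0, ∞)` gives
`tanh t / t < tanh s / s`. The bounds follow on comparing `t` with `q * t`.
-/

open Real Set

lemma hasDerivAt_tanh_s8 (t : ℝ) : HasDerivAt tanh (cosh t ^ 2)⁻¹ t := by
  have hquot := (hasDerivAt_sinh t).div (hasDerivAt_cosh t) (cosh_pos t).ne'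
  rw [← sq, ← sq, cosh_sq_sub_sinh_sq, one_div] at hquot
  exact hquot.congr_of_eventuallyEq (.of_forall tanh_eq_sinh_div_cosh)

lemma strictMono_tanh : StrictMono tanh :=
  strictMono_of_deriv_pos fun t => by
    rw [(hasDerivAt_tanh_s8 t).deriv]
    exact inv_pos.2 (pow_pos (cosh_pos t) 2)

lemma tanh_pos {t : ℝ} (ht : 0 < t) : 0 < tanh t :=
  tanh_zero ▸ strictMono_tanh ht

lemma strictConcaveOn_tanh_Ici : StrictConcaveOn ℝ (Ici 0) tanh := by
  have hcont : Continuous tanh :=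
    continuous_iff_continuousAt.2 fun t => (hasDerivAt_tanh_s8 t).continuousAt
  refine StrictAntiOn.strictConcaveOn_of_deriv (convex_Ici 0) hcont.continuousOn ?_
  rw [interior_Ici]
  intro s hs t ht hst
  rw [(hasDerivAt_tanh_s8 s).deriv, (hasDerivAt_tanh_s8 t).deriv]
  have hcosh : cosh s < cosh t := cosh_strictMonoOn (mem_Ioi.1 hs).le (mem_Ioi.1 ht).le hst
  gcongr

lemma strictAntiOn_tanh_div_self : StrictAntiOn (fun t => tanh t / t) (Ioi 0) := by
  intro s hs t ht hst
  simpa only [tanh_zero, sub_zero] using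
    strictConcaveOn_tanh_Ici.secant_strict_mono self_mem_Ici (mem_Ioi.1 hs).le (mem_Ioi.1 ht).le
      (ne_of_gt hs) (ne_of_gt ht) hst

lemma tanh_div_tanh_mem_Ioo_one_div {s t : ℝ} (hs : 0 < s) (hst : s < t) :
    tanh t / tanh s ∈ Ioo 1 (t / s) := by
  have ht : 0 < t := hs.trans hst
  refine ⟨(one_lt_div (tanh_pos hs)).2 (strictMono_tanh hst), ?_⟩
  rw [div_lt_div_iff₀ (tanh_pos hs) hs, mul_comm t, ← div_lt_div_iff₀ ht hs]
  exact strictAntiOn_tanh_div_self hs ht hst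

lemma tanh_div_tanh_mem_Ioo_div_one {s t : ℝ} (hs : 0 < s) (hst : s < t) :
    tanh s / tanh t ∈ Ioo (s / t) 1 := by
  obtain ⟨hlower, hupper⟩ := tanh_div_tanh_mem_Ioo_one_div hs hst
  rw [← inv_div t s, ← inv_div (tanh t) (tanh s)]
  exact ⟨inv_strictAnti₀ (one_pos.trans hlower) hupper, inv_lt_one_of_one_lt₀ hlower⟩

lemma tanh_abs_div_tanh_mul_abs (q t : ℝ) :
    tanh |t| / tanh (q * |t|) = tanh t / tanh (q * t) := by
  rcases abs_choice t with h | h <;>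
    simp only [h, mul_neg, tanh_neg, neg_div_neg_eq]

lemma tanh_half_log {x : ℝ} (hx : 0 < x) : tanh (log x / 2) = (x - 1) / (x + 1) := by
  have hsq : x = exp (log x / 2) ^ 2 := by
    rw [← exp_nat_mul, Nat.cast_ofNat, mul_div_cancel₀ _ two_ne_zero, exp_log hx]
  rw [tanh_eq, exp_neg]
  conv_rhs => rw [hsq]
  field_simp

lemma rpow_add_one_mul_div_eq_tanh_div_tanh (q : ℝ) {x : ℝ} (hx : 0 < x) :
    (x ^ q + 1) * (x - 1) / ((x ^ q - 1) * (x + 1)) =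
      tanh (log x / 2) / tanh (q * (log x / 2)) := by
  rw [← mul_div_assoc, ← log_rpow hx, tanh_half_log hx, tanh_half_log (rpow_pos_of_pos hx q),
    div_div_div_eq]
  ring

theorem stmt_8_general (p : ℝ) (hp : 1 < p) (x : ℝ) (hx : 0 < x) (hx_ne : x ≠ 1) :
    (p < 2 → 1 < (x ^ (p - 1) + 1) * (x - 1) / ((x ^ (p - 1) - 1) * (x + 1)) ∧
      (x ^ (p - 1) + 1) * (x - 1) / ((x ^ (p - 1) - 1) * (x + 1)) < 1 / (p - 1)) ∧
    (p = 2 → (x ^ (p - 1) + 1) * (x - 1) / ((x ^ (p - 1) - 1) * (x + 1)) = 1) ∧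
    (2 < p → 1 / (p - 1) < (x ^ (p - 1) + 1) * (x - 1) / ((x ^ (p - 1) - 1) * (x + 1)) ∧
      (x ^ (p - 1) + 1) * (x - 1) / ((x ^ (p - 1) - 1) * (x + 1)) < 1) := by
  obtain ⟨t, ht, hratio⟩ : ∃ t : ℝ, 0 < t ∧
      (x ^ (p - 1) + 1) * (x - 1) / ((x ^ (p - 1) - 1) * (x + 1)) =
        tanh t / tanh ((p - 1) * t) := by
    refine ⟨|log x / 2|, abs_pos.2 (div_ne_zero (log_ne_zero_of_pos_of_ne_one hx hx_ne)
      two_ne_zero), ?_⟩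
    rw [tanh_abs_div_tanh_mul_abs, rpow_add_one_mul_div_eq_tanh_div_tanh _ hx]
  have hpt : 0 < (p - 1) * t := mul_pos (sub_pos.2 hp) ht
  have hdiv : t / ((p - 1) * t) = 1 / (p - 1) := by
    rw [div_mul_cancel_right₀ ht.ne', one_div]
  rw [hratio, ← hdiv]
  refine ⟨fun hp2 => ?_, fun hp2 => ?_, fun hp2 => ?_⟩
  · exact tanh_div_tanh_mem_Ioo_one_div hpt (mul_lt_of_lt_one_left ht (by linarith))
  · rw [show (p - 1) * t = t by rw [hp2]; ring, div_self (tanh_pos ht).ne']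
  · exact tanh_div_tanh_mem_Ioo_div_one ht (lt_mul_of_one_lt_left ht (by linarith))

/-- Bounds for `g1(x) = (x^(p-1)+1)(x-1)/((x^(p-1)-1)(x+1))`, `x > 1`, `p > 1`. -/
theorem stmt_8 (p : ℝ) (hp : 1 < p) (x : ℝ) (hx : 1 < x) :
    (p < 2 → 1 < (x ^ (p - 1) + 1) * (x - 1) / ((x ^ (p - 1) - 1) * (x + 1)) ∧
      (x ^ (p - 1) + 1) * (x - 1) / ((x ^ (p - 1) - 1) * (x + 1)) < 1 / (p - 1)) ∧
    (p = 2 → (x ^ (p - 1) + 1) * (x - 1) / ((x ^ (p - 1) - 1) * (x + 1)) = 1) ∧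
    (2 < p → 1 / (p - 1) < (x ^ (p - 1) + 1) * (x - 1) / ((x ^ (p - 1) - 1) * (x + 1)) ∧
      (x ^ (p - 1) + 1) * (x - 1) / ((x ^ (p - 1) - 1) * (x + 1)) < 1) :=
  stmt_8_general p hp x (one_pos.trans hx) hx.ne'
end

section
/- Let p > 1 and let a, b ∈ ℝⁿ be such that λa + (1−λ)b ≠ 0 for every λ ∈ [0,1]. Then ⟨a − b, |a|^{p−2}a − |b|^{p−2}b⟩ = |a − b|² ∫₀¹ |λa + (1−λ)b|^{p−2} dλ + (p−2) ∫₀¹ |λa + (1−λ)b|^{p−4} ⟨a − b, λa + (1−λ)b⟩² dλ. -/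
open scoped RealInnerProductSpace

/-!
For a fixed vector `v`, integrate the derivative of `x ↦ ⟪v, ‖x‖ ^ q • x⟫` along the segment from
`b` to `a`. Away from the origin the derivative of `x ↦ ‖x‖ ^ q • x` at `x` in the direction `w` is
`‖x‖ ^ q • w + (q * ‖x‖ ^ (q - 2) * ⟪x, w⟫) • x`. The two summands give the two integrals, with
`q = p - 2` and `v = w = a - b`.
-/

open AffineMap (lineMap)
open MeasureTheory Set

section FundamentalTheorem

variable {E F : Type*} [NormedAddCommGroup E] [NormedSpace ℝ E]
  [NormedAddCommGroup F] [NormedSpace ℝ F] [CompleteSpace F]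

theorem integral_lineMap_eq_sub_of_hasFDerivAt {f : E → F} {f' : E → E →L[ℝ] F} {a b : E}
    (hf : ∀ x ∈ segment ℝ a b, HasFDerivAt f (f' x) x)
    (hint : IntervalIntegrable (fun t : ℝ => f' (lineMap a b t) (b - a)) volume 0 1) :
    ∫ t in (0 : ℝ)..1, f' (lineMap a b t) (b - a) = f b - f a := by
  have hderiv : ∀ t ∈ uIcc (0 : ℝ) 1,
      HasDerivAt (fun t : ℝ => f (lineMap a b t)) (f' (lineMap a b t) (b - a)) t := by
    intro t ht
    rw [uIcc_of_le zero_le_one] at ht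
    have hmem : lineMap a b t ∈ segment ℝ a b :=
      segment_eq_image_lineMap ℝ a b ▸ mem_image_of_mem _ ht
    exact (hf _ hmem).comp_hasDerivAt t AffineMap.hasDerivAt_lineMap
  simpa using intervalIntegral.integral_eq_sub_of_hasDerivAt hderiv hint

end FundamentalTheorem

section NormRpow

variable {E : Type*} [NormedAddCommGroup E] [InnerProductSpace ℝ E]

theorem hasStrictFDerivAt_norm_rpow_of_ne_zero {x : E} (hx : x ≠ 0) (q : ℝ) :
    HasStrictFDerivAt (fun y : E => ‖y‖ ^ q) ((q * ‖x‖ ^ (q - 2)) • innerSL ℝ x) x := by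
  have hsq (y : E) (r : ℝ) : (‖y‖ ^ 2) ^ r = ‖y‖ ^ (2 * r) := by
    rw [Real.rpow_mul (norm_nonneg y), Real.rpow_two]
  have hd := (hasStrictFDerivAt_norm_sq x).rpow_const (p := q / 2) (Or.inl (by simpa using hx))
  simp only [hsq, mul_sub, mul_div_cancel₀ q (two_ne_zero' ℝ), mul_one] at hd
  refine hd.congr_fderiv ?_
  ext w
  simp only [smul_apply, coe_innerSL_apply, nsmul_eq_mul, Nat.cast_ofNat, smul_eq_mul]
  ring

theorem hasStrictFDerivAt_norm_rpow_smul_self {x : E} (hx : x ≠ 0) (q : ℝ) :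
    HasStrictFDerivAt (fun y : E => ‖y‖ ^ q • y)
      (‖x‖ ^ q • ContinuousLinearMap.id ℝ E +
        ((q * ‖x‖ ^ (q - 2)) • innerSL ℝ x).smulRight x) x :=
  (hasStrictFDerivAt_norm_rpow_of_ne_zero hx q).smul (hasStrictFDerivAt_id x)

theorem hasFDerivAt_inner_norm_rpow_smul_self {x : E} (hx : x ≠ 0) (v : E) (q : ℝ) :
    HasFDerivAt (fun y : E => ⟪v, ‖y‖ ^ q • y⟫)
      (‖x‖ ^ q • innerSL ℝ v + (q * ‖x‖ ^ (q - 2) * ⟪v, x⟫) • innerSL ℝ x) x := by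
  refine ((innerSL ℝ v).hasFDerivAt.comp x
    (hasStrictFDerivAt_norm_rpow_smul_self hx q).hasFDerivAt).congr_fderiv ?_
  ext w
  simp only [ContinuousLinearMap.comp_apply, add_apply, smul_apply,
    ContinuousLinearMap.smulRight_apply, ContinuousLinearMap.id_apply, coe_innerSL_apply,
    inner_add_right, real_inner_smul_right, smul_eq_mul]
  ring

theorem continuousOn_norm_lineMap_rpow {a b : E} (h : 0 ∉ segment ℝ a b) (q : ℝ) :
    ContinuousOn (fun t : ℝ => ‖lineMap a b t‖ ^ q) (Icc 0 1) := by
  rw [segment_eq_image_lineMap] at h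
  refine AffineMap.lineMap_continuous.norm.continuousOn.rpow_const fun t ht => Or.inl ?_
  exact norm_ne_zero_iff.2 fun h₀ => h ⟨t, ht, h₀⟩

theorem inner_norm_rpow_smul_sub_eq_integral {a b : E} (h : 0 ∉ segment ℝ a b) (v : E) (q : ℝ) :
    ⟪v, ‖b‖ ^ q • b - ‖a‖ ^ q • a⟫ =
      ⟪v, b - a⟫ * (∫ t in (0 : ℝ)..1, ‖lineMap a b t‖ ^ q) +
        q * ∫ t in (0 : ℝ)..1,
          ‖lineMap a b t‖ ^ (q - 2) * (⟪lineMap a b t, b - a⟫ * ⟪v, lineMap a b t⟫) := by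
  have hint₁ : IntervalIntegrable (fun t : ℝ => ⟪v, b - a⟫ * ‖lineMap a b t‖ ^ q) volume 0 1 :=
    ((continuousOn_norm_lineMap_rpow h q).intervalIntegrable_of_Icc zero_le_one).const_mul _
  have hint₂ : IntervalIntegrable (fun t : ℝ => q * (‖lineMap a b t‖ ^ (q - 2) *
      (⟪lineMap a b t, b - a⟫ * ⟪v, lineMap a b t⟫))) volume 0 1 := by
    have hinner : Continuous fun t : ℝ => ⟪lineMap a b t, b - a⟫ * ⟪v, lineMap a b t⟫ :=
      (AffineMap.lineMap_continuous.inner continuous_const).mul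
        (continuous_const.inner AffineMap.lineMap_continuous)
    exact (((continuousOn_norm_lineMap_rpow h (q - 2)).mul
      hinner.continuousOn).intervalIntegrable_of_Icc zero_le_one).const_mul q
  have happly (x : E) :
      (‖x‖ ^ q • innerSL ℝ v + (q * ‖x‖ ^ (q - 2) * ⟪v, x⟫) • innerSL ℝ x) (b - a) =
        ⟪v, b - a⟫ * ‖x‖ ^ q + q * (‖x‖ ^ (q - 2) * (⟪x, b - a⟫ * ⟪v, x⟫)) := by
    simp only [add_apply, smul_apply, coe_innerSL_apply, smul_eq_mul]
    ring
  have hFTC := integral_lineMap_eq_sub_of_hasFDerivAt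
    (fun x hx => hasFDerivAt_inner_norm_rpow_smul_self (ne_of_mem_of_not_mem hx h) v q)
    (by simpa only [happly] using hint₁.add hint₂)
  simp only [happly] at hFTC
  rw [intervalIntegral.integral_add hint₁ hint₂, intervalIntegral.integral_const_mul,
    intervalIntegral.integral_const_mul] at hFTC
  rw [inner_sub_right]
  exact hFTC.symm

theorem stmt_11_general (p : ℝ) (a b : E)
    (h : ∀ l ∈ Icc (0 : ℝ) 1, l • a + (1 - l) • b ≠ 0) :
    ⟪a - b, ‖a‖ ^ (p - 2) • a - ‖b‖ ^ (p - 2) • b⟫ =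
      ‖a - b‖ ^ 2 * (∫ l in (0 : ℝ)..1, ‖l • a + (1 - l) • b‖ ^ (p - 2)) +
        (p - 2) * ∫ l in (0 : ℝ)..1,
          ‖l • a + (1 - l) • b‖ ^ (p - 4) * ⟪a - b, l • a + (1 - l) • b⟫ ^ 2 := by
  have hline (l : ℝ) : l • a + (1 - l) • b = lineMap b a l := by
    rw [AffineMap.lineMap_apply_module, add_comm]
  simp only [hline] at h ⊢
  have hseg : 0 ∉ segment ℝ b a := by
    rw [segment_eq_image_lineMap]
    rintro ⟨l, hl, h₀⟩
    exact h l hl h₀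
  rw [inner_norm_rpow_smul_sub_eq_integral hseg, real_inner_self_eq_norm_sq,
    show p - 2 - 2 = p - 4 by ring]
  simp only [real_inner_comm (a - b), sq]

end NormRpow

/-- The identity (eq9): for `p > 1` and `a b ∈ ℝⁿ` with `λa + (1-λ)b ≠ 0` for all `λ ∈ [0,1]`,
`⟪a-b, |a|^(p-2)a - |b|^(p-2)b⟫ = |a-b|² ∫₀¹ |λa+(1-λ)b|^(p-2) dλ
  + (p-2) ∫₀¹ |λa+(1-λ)b|^(p-4) ⟪a-b, λa+(1-λ)b⟫² dλ`. -/
theorem stmt_11 (n : ℕ) (p : ℝ) (hp : 1 < p) (a b : EuclideanSpace ℝ (Fin n))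
    (h : ∀ l ∈ Set.Icc (0 : ℝ) 1, l • a + (1 - l) • b ≠ 0) :
    ⟪a - b, ‖a‖ ^ (p - 2) • a - ‖b‖ ^ (p - 2) • b⟫ =
      ‖a - b‖ ^ 2 * (∫ l in (0 : ℝ)..1, ‖l • a + (1 - l) • b‖ ^ (p - 2)) +
        (p - 2) * ∫ l in (0 : ℝ)..1,
          ‖l • a + (1 - l) • b‖ ^ (p - 4) * ⟪a - b, l • a + (1 - l) • b⟫ ^ 2 :=
  stmt_11_general p a b h
end

section
/- Let p ≥ 2 and let a, b ∈ ℝⁿ with a ≠ b. Then ⟨a − b, |a|^{p−2}a − |b|^{p−2}b⟩ ≥ |a − b|² ∫₀¹ |λa + (1−λ)b|^{p−2} dλ. -/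
open scoped RealInnerProductSpace

/-!
Parametrise the line through `a` and `b` by `q + t • v`, where `v = a - b` and `q` is the point of
the line closest to the origin. As `q ⟂ v`, the weight `h t = ‖q + t • v‖ ^ (p - 2)` is even and
nondecreasing on `[0, ∞)`, and the inner product equals `‖v‖ ^ 2` times the increment of `t * h t`
between the parameters of `b` and `a`. This increment dominates the integral of `h`: formally
`(t * h t)' = h t + t * h' t ≥ h t`. Only the monotonicity of `r ↦ r ^ (p - 2)` matters, so any
monotone weight will do.
-/

open Set

section IntervalIntegral

variable {h : ℝ → ℝ} {x y : ℝ}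

theorem intervalIntegral_le_mul_sub_mul_of_monotoneOn (hmono : MonotoneOn h (Icc x y))
    (hx : 0 ≤ x) (hxy : x ≤ y) : ∫ t in x..y, h t ≤ y * h y - x * h x := by
  have hint : IntervalIntegrable h MeasureTheory.volume x y :=
    MonotoneOn.intervalIntegrable (by rwa [uIcc_of_le hxy])
  have hle_right : ∀ t ∈ Icc x y, h t ≤ h y := fun t ht ↦ hmono ht (right_mem_Icc.2 hxy) ht.2
  calc ∫ t in x..y, h t ≤ ∫ _ in x..y, h y :=
        intervalIntegral.integral_mono_on hxy hint intervalIntegrable_const hle_right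
    _ = y * h y - x * h y := by rw [intervalIntegral.integral_const, smul_eq_mul, sub_mul]
    _ ≤ y * h y - x * h x := by gcongr; exact hle_right x (left_mem_Icc.2 hxy)

theorem intervalIntegral_le_mul_sub_mul_of_even (heven : h.Even) (hmono : MonotoneOn h (Ici 0))
    (hxy : x ≤ y) : ∫ t in x..y, h t ≤ y * h y - x * h x := by
  have nonneg_case {x y : ℝ} (hx : 0 ≤ x) (hxy : x ≤ y) :
      ∫ t in x..y, h t ≤ y * h y - x * h x :=
    intervalIntegral_le_mul_sub_mul_of_monotoneOn
      (hmono.mono (Icc_subset_Ici_self.trans (Ici_subset_Ici.2 hx))) hx hxy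
  have nonpos_case {x y : ℝ} (hy : y ≤ 0) (hxy : x ≤ y) :
      ∫ t in x..y, h t ≤ y * h y - x * h x :=
    calc ∫ t in x..y, h t = ∫ t in -y..-x, h t := by
          simp only [← intervalIntegral.integral_comp_neg, heven _]
      _ ≤ -x * h (-x) - -y * h (-y) := nonneg_case (neg_nonneg.2 hy) (neg_le_neg hxy)
      _ = y * h y - x * h x := by rw [heven, heven]; ring
  rcases le_total 0 x with hx | hx
  · exact nonneg_case hx hxy
  rcases le_total y 0 with hy | hy
  · exact nonpos_case hy hxy
  have hint {z : ℝ} (hz : 0 ≤ z) : IntervalIntegrable h MeasureTheory.volume 0 z :=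
    (hmono.mono (by rw [uIcc_of_le hz]; exact Icc_subset_Ici_self)).intervalIntegrable
  have hint_left : IntervalIntegrable h MeasureTheory.volume x 0 := by
    rw [IntervalIntegrable.iff_comp_neg, neg_zero]
    simpa only [heven _] using (hint (neg_nonneg.2 hx)).symm
  rw [← intervalIntegral.integral_add_adjacent_intervals hint_left (hint hy)]
  linarith [nonpos_case le_rfl hx, nonneg_case le_rfl hy]

end IntervalIntegral

section InnerProductSpace

variable {E : Type*} [NormedAddCommGroup E] [InnerProductSpace ℝ E] {q v : E}

theorem norm_add_smul_eq_sqrt_of_inner_eq_zero (hvq : ⟪v, q⟫ = 0) (t : ℝ) :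
    ‖q + t • v‖ = √(‖q‖ ^ 2 + t ^ 2 * ‖v‖ ^ 2) := by
  have horth : ⟪q, t • v⟫ = 0 := by rw [real_inner_smul_right, real_inner_comm, hvq, mul_zero]
  rw [norm_add_eq_sqrt_iff_real_inner_eq_zero.2 horth, norm_smul, Real.norm_eq_abs, ← sq, ← sq,
    mul_pow, sq_abs]

theorem even_norm_add_smul_of_inner_eq_zero (hvq : ⟪v, q⟫ = 0) :
    Function.Even fun t : ℝ ↦ ‖q + t • v‖ := fun t ↦ by
  simp only [norm_add_smul_eq_sqrt_of_inner_eq_zero hvq, neg_sq]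

theorem monotoneOn_norm_add_smul_of_inner_eq_zero (hvq : ⟪v, q⟫ = 0) :
    MonotoneOn (fun t : ℝ ↦ ‖q + t • v‖) (Ici 0) := fun s (hs : 0 ≤ s) t _ hst ↦ by
  simp only [norm_add_smul_eq_sqrt_of_inner_eq_zero hvq]
  gcongr

theorem exists_inner_sub_smul_eq_zero (v b : E) : ∃ s : ℝ, ⟪v, b - s • v⟫ = 0 := by
  obtain ⟨s, hs⟩ := Submodule.mem_span_singleton.1 ((ℝ ∙ v).starProjection_apply_mem b)
  refine ⟨s, Submodule.mem_orthogonal_singleton_iff_inner_right.1 ?_⟩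
  rw [hs]
  exact (ℝ ∙ v).sub_starProjection_mem_orthogonal b

variable {φ : ℝ → ℝ}

theorem norm_sq_mul_intervalIntegral_le_inner_of_inner_eq_zero (hφ : MonotoneOn φ (Ici 0))
    (hvq : ⟪v, q⟫ = 0) {x y : ℝ} (hxy : x ≤ y) :
    ‖v‖ ^ 2 * ∫ t in x..y, φ ‖q + t • v‖ ≤
      ⟪v, φ ‖q + y • v‖ • (q + y • v) - φ ‖q + x • v‖ • (q + x • v)⟫ := by
  have heven : Function.Even fun t : ℝ ↦ φ ‖q + t • v‖ :=
    fun t ↦ congrArg φ (even_norm_add_smul_of_inner_eq_zero hvq t)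
  have hmono : MonotoneOn (fun t : ℝ ↦ φ ‖q + t • v‖) (Ici 0) :=
    hφ.comp (monotoneOn_norm_add_smul_of_inner_eq_zero hvq) fun _ _ ↦ norm_nonneg _
  have hinner (t : ℝ) : ⟪v, q + t • v⟫ = t * ‖v‖ ^ 2 := by
    rw [inner_add_right, hvq, zero_add, real_inner_smul_right, real_inner_self_eq_norm_sq]
  calc ‖v‖ ^ 2 * ∫ t in x..y, φ ‖q + t • v‖
      ≤ ‖v‖ ^ 2 * (y * φ ‖q + y • v‖ - x * φ ‖q + x • v‖) := by
        gcongr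
        exact intervalIntegral_le_mul_sub_mul_of_even heven hmono hxy
    _ = ⟪v, φ ‖q + y • v‖ • (q + y • v) - φ ‖q + x • v‖ • (q + x • v)⟫ := by
        rw [inner_sub_right, real_inner_smul_right, real_inner_smul_right, hinner, hinner]
        ring

theorem stmt_12_general (hφ : MonotoneOn φ (Ici 0)) (a b : E) :
    ‖a - b‖ ^ 2 * (∫ l in (0 : ℝ)..1, φ ‖l • a + (1 - l) • b‖) ≤
      ⟪a - b, φ ‖a‖ • a - φ ‖b‖ • b⟫ := by
  obtain ⟨s, hs⟩ := exists_inner_sub_smul_eq_zero (a - b) b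
  have hline (l : ℝ) : l • a + (1 - l) • b = b - s • (a - b) + (l + s) • (a - b) := by module
  have ha : b - s • (a - b) + (1 + s) • (a - b) = a := by module
  have hb : b - s • (a - b) + (0 + s) • (a - b) = b := by module
  simp only [hline]
  rw [intervalIntegral.integral_comp_add_right fun t ↦ φ ‖b - s • (a - b) + t • (a - b)‖]
  simpa only [ha, hb] using norm_sq_mul_intervalIntegral_le_inner_of_inner_eq_zero hφ hs
    (add_le_add_left zero_le_one s)

end InnerProductSpace

/-- Inequality (nb3a): for `p ≥ 2` and `a ≠ b` in `ℝⁿ`,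
`⟪a-b, |a|^(p-2)a - |b|^(p-2)b⟫ ≥ |a-b|² ∫₀¹ |λa+(1-λ)b|^(p-2) dλ`. -/
theorem stmt_12 (n : ℕ) (p : ℝ) (hp : 2 ≤ p) (a b : EuclideanSpace ℝ (Fin n)) (hab : a ≠ b) :
    ‖a - b‖ ^ 2 * (∫ l in (0 : ℝ)..1, ‖l • a + (1 - l) • b‖ ^ (p - 2)) ≤
      ⟪a - b, ‖a‖ ^ (p - 2) • a - ‖b‖ ^ (p - 2) • b⟫ :=
  stmt_12_general (Real.monotoneOn_rpow_Ici_of_exponent_nonneg (sub_nonneg.2 hp)) a b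
end

section
/- Let 1 < p ≤ 2 and let a, b ∈ ℝⁿ with a ≠ b. Then ⟨a − b, |a|^{p−2}a − |b|^{p−2}b⟩ ≥ (p−1) |a − b|² ∫₀¹ |λa + (1−λ)b|^{p−2} dλ. -/
open scoped RealInnerProductSpace

/-!
The field `F x = ‖x‖ ^ (p - 2) • x` is monotone, so `g t = ⟪a - b, F (t • a + (1 - t) • b)⟫` is a
monotone function of `t`. By Lebesgue's theorem `g'` is integrable with `∫₀¹ g' ≤ g 1 - g 0`, which
is the right-hand side; neither continuity of `g` nor its behaviour at the point where the segment
may meet the origin matters. Everywhere else, differentiating and applying Cauchy–Schwarz to the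
term with the nonpositive factor `p - 2` gives
`(p - 1) * ‖a - b‖ ^ 2 * ‖t • a + (1 - t) • b‖ ^ (p - 2) ≤ g' t`. The same bound shows that the
integrand on the left is integrable.
-/

open AffineMap MeasureTheory Set

theorem integral_deriv_le_sub_of_monotoneOn {f : ℝ → ℝ} {u v : ℝ} (huv : u ≤ v)
    (hf : MonotoneOn f (uIcc u v)) : ∫ t in u..v, deriv f t ≤ f v - f u := by
  have hfuv : f u ≤ f v := hf left_mem_uIcc right_mem_uIcc huv
  have hmem := hf.intervalIntegral_deriv_mem_uIcc
  rw [uIcc_of_le (sub_nonneg.2 hfuv)] at hmem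
  exact hmem.2

theorem monotoneOn_rpow_mul_self {q : ℝ} (hq : -1 < q) :
    MonotoneOn (fun r : ℝ => r ^ q * r) (Ici 0) := by
  have hq' : 0 < q + 1 := by linarith
  refine (Real.monotoneOn_rpow_Ici_of_exponent_nonneg hq'.le).congr fun r hr => ?_
  exact Real.rpow_add_one' hr hq'.ne'

section InnerProductSpace

variable {E : Type*} [NormedAddCommGroup E] [InnerProductSpace ℝ E]

theorem norm_sub_mul_le_inner_sub_smul_sub_smul {α β : ℝ} (h : 0 ≤ α + β) (x y : E) :
    (‖x‖ - ‖y‖) * (α * ‖x‖ - β * ‖y‖) ≤ ⟪x - y, α • x - β • y⟫ := by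
  have expand : ⟪x - y, α • x - β • y⟫ = α * ‖x‖ ^ 2 + β * ‖y‖ ^ 2 - (α + β) * ⟪x, y⟫ := by
    simp only [inner_sub_left, inner_sub_right, real_inner_smul_right, real_inner_self_eq_norm_sq,
      real_inner_comm x y]
    ring
  rw [expand]
  linarith [mul_le_mul_of_nonneg_left (real_inner_le_norm x y) h]

theorem inner_sub_norm_rpow_smul_sub_nonneg {q : ℝ} (hq : -1 < q) (x y : E) :
    0 ≤ ⟪x - y, ‖x‖ ^ q • x - ‖y‖ ^ q • y⟫ :=
  calc
    0 ≤ (‖x‖ - ‖y‖) * (‖x‖ ^ q * ‖x‖ - ‖y‖ ^ q * ‖y‖) := by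
      rw [mul_comm]
      exact (monovaryOn_id_iff.2 (monotoneOn_rpow_mul_self hq)).sub_mul_sub_nonneg
        (norm_nonneg y) (norm_nonneg x)
    _ ≤ ⟪x - y, ‖x‖ ^ q • x - ‖y‖ ^ q • y⟫ :=
      norm_sub_mul_le_inner_sub_smul_sub_smul (by positivity) x y

theorem monotone_inner_lineMap_of_inner_sub_nonneg {F : E → E}
    (hF : ∀ x y, 0 ≤ ⟪x - y, F x - F y⟫) (x y : E) :
    Monotone fun t : ℝ => ⟪y - x, F (lineMap x y t)⟫ := by
  intro s t hst
  rcases hst.eq_or_lt with rfl | hst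
  · rfl
  have hsub : lineMap x y t - lineMap x y s = (t - s) • (y - x) := by
    simp only [lineMap_apply_module']
    module
  have h := hF (lineMap x y t) (lineMap x y s)
  rw [hsub, real_inner_smul_left, inner_sub_right] at h
  exact sub_nonneg.1 (nonneg_of_mul_nonneg_right h (sub_pos.2 hst))

theorem ae_lineMap_ne {x y : E} (hxy : x ≠ y) (z : E) : ∀ᵐ t : ℝ, lineMap x y t ≠ z := by
  have hsub : {t : ℝ | lineMap x y t = z}.Subsingleton :=
    subsingleton_singleton.preimage (lineMap_injective ℝ hxy)
  simpa only [ae_iff, not_not] using hsub.measure_zero volume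

section Calculus

variable {q t : ℝ} {c : ℝ → E} {d : E}

theorem hasDerivAt_norm_rpow_comp (hc : HasDerivAt c d t) (h0 : c t ≠ 0) :
    HasDerivAt (fun s => ‖c s‖ ^ q) (q * ‖c t‖ ^ (q - 2) * ⟪c t, d⟫) t := by
  have sq_rpow (s r : ℝ) : (‖c s‖ ^ 2) ^ r = ‖c s‖ ^ (2 * r) := by
    simpa using (Real.rpow_natCast_mul (norm_nonneg (c s)) 2 r).symm
  have h := hc.norm_sq.rpow_const (p := q / 2) (Or.inl (by positivity))
  simp only [sq_rpow] at h
  convert h using 1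
  all_goals ring_nf

theorem hasDerivAt_norm_rpow_smul_comp (hc : HasDerivAt c d t) (h0 : c t ≠ 0) :
    HasDerivAt (fun s => ‖c s‖ ^ q • c s)
      (‖c t‖ ^ q • d + (q * ‖c t‖ ^ (q - 2) * ⟪c t, d⟫) • c t) t :=
  (hasDerivAt_norm_rpow_comp hc h0).smul hc

end Calculus

theorem add_one_mul_le_inner_deriv_norm_rpow_smul {q : ℝ} (hq : q ≤ 0) {x : E} (hx : x ≠ 0)
    (d : E) :
    (q + 1) * ‖d‖ ^ 2 * ‖x‖ ^ q ≤ ⟪d, ‖x‖ ^ q • d + (q * ‖x‖ ^ (q - 2) * ⟪x, d⟫) • x⟫ := by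
  have cauchy_schwarz : ⟪x, d⟫ ^ 2 ≤ ‖x‖ ^ 2 * ‖d‖ ^ 2 := by
    simpa only [sq, real_inner_self_eq_norm_sq] using real_inner_mul_inner_self_le x d
  have hsplit : ‖x‖ ^ q = ‖x‖ ^ (q - 2) * ‖x‖ ^ 2 := by
    rw [← Real.rpow_natCast, ← Real.rpow_add (norm_pos_iff.2 hx)]
    norm_num
  calc
    (q + 1) * ‖d‖ ^ 2 * ‖x‖ ^ q
        = ‖x‖ ^ q * ‖d‖ ^ 2 + q * ‖x‖ ^ (q - 2) * (‖x‖ ^ 2 * ‖d‖ ^ 2) := by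
      rw [hsplit]
      ring
    _ ≤ ‖x‖ ^ q * ‖d‖ ^ 2 + q * ‖x‖ ^ (q - 2) * ⟪x, d⟫ ^ 2 := by
      have coeff_nonpos : q * ‖x‖ ^ (q - 2) ≤ 0 :=
        mul_nonpos_of_nonpos_of_nonneg hq (by positivity)
      exact add_le_add_right (mul_le_mul_of_nonpos_left cauchy_schwarz coeff_nonpos) _
    _ = ⟪d, ‖x‖ ^ q • d + (q * ‖x‖ ^ (q - 2) * ⟪x, d⟫) • x⟫ := by
      rw [inner_add_right, real_inner_smul_right, real_inner_smul_right,
        real_inner_self_eq_norm_sq, real_inner_comm x d]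
      ring

theorem le_deriv_inner_norm_rpow_smul_lineMap {q : ℝ} (hq : q ≤ 0) {x y : E} {t : ℝ}
    (h0 : lineMap x y t ≠ 0) :
    (q + 1) * ‖y - x‖ ^ 2 * ‖lineMap x y t‖ ^ q ≤
      deriv (fun s : ℝ => ⟪y - x, ‖lineMap x y s‖ ^ q • lineMap x y s⟫) t := by
  have hderiv := (hasDerivAt_const t (y - x)).inner ℝ
    (hasDerivAt_norm_rpow_smul_comp (q := q) hasDerivAt_lineMap h0)
  rw [inner_zero_left, add_zero] at hderiv
  rw [hderiv.deriv]
  exact add_one_mul_le_inner_deriv_norm_rpow_smul hq h0 (y - x)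

section Segment

variable {q : ℝ} {x y : E}

theorem monotone_inner_norm_rpow_smul_lineMap (hq : -1 < q) (x y : E) :
    Monotone fun t : ℝ => ⟪y - x, ‖lineMap x y t‖ ^ q • lineMap x y t⟫ :=
  monotone_inner_lineMap_of_inner_sub_nonneg (F := fun z => ‖z‖ ^ q • z)
    (inner_sub_norm_rpow_smul_sub_nonneg hq) x y

theorem ae_le_deriv_inner_norm_rpow_smul_lineMap (hq : q ≤ 0) (hxy : x ≠ y) :
    (fun t : ℝ => (q + 1) * ‖y - x‖ ^ 2 * ‖lineMap x y t‖ ^ q) ≤ᵐ[volume]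
      deriv fun t : ℝ => ⟪y - x, ‖lineMap x y t‖ ^ q • lineMap x y t⟫ := by
  filter_upwards [ae_lineMap_ne hxy 0] with t ht
  exact le_deriv_inner_norm_rpow_smul_lineMap hq ht

theorem intervalIntegrable_norm_lineMap_rpow (hq : -1 < q) (hq0 : q ≤ 0) (hxy : x ≠ y) (u v : ℝ) :
    IntervalIntegrable (fun t => ‖lineMap x y t‖ ^ q) volume u v := by
  have hC : 0 < (q + 1) * ‖y - x‖ ^ 2 :=
    mul_pos (by linarith) (pow_pos (norm_sub_pos_iff.2 hxy.symm) 2)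
  have hderiv := ((monotone_inner_norm_rpow_smul_lineMap hq x y).monotoneOn
    (uIcc u v)).intervalIntegrable_deriv
  have hmeas : Measurable fun t : ℝ => ‖lineMap x y t‖ ^ q :=
    lineMap_continuous.norm.measurable.pow_const q
  refine (hderiv.const_mul ((q + 1) * ‖y - x‖ ^ 2)⁻¹).mono_fun' hmeas.aestronglyMeasurable ?_
  filter_upwards [ae_restrict_of_ae (ae_le_deriv_inner_norm_rpow_smul_lineMap hq0 hxy)] with t ht
  rw [Real.norm_of_nonneg (by positivity)]
  exact (le_inv_mul_iff₀ hC).2 ht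

theorem integral_norm_lineMap_rpow_le_inner (hq : -1 < q) (hq0 : q ≤ 0) (hxy : x ≠ y) :
    (q + 1) * ‖y - x‖ ^ 2 * ∫ t in (0 : ℝ)..1, ‖lineMap x y t‖ ^ q ≤
      ⟪y - x, ‖y‖ ^ q • y - ‖x‖ ^ q • x⟫ := by
  set g : ℝ → ℝ := fun t => ⟪y - x, ‖lineMap x y t‖ ^ q • lineMap x y t⟫ with hg
  have hmono : MonotoneOn g (uIcc 0 1) :=
    (monotone_inner_norm_rpow_smul_lineMap hq x y).monotoneOn _
  calc
    (q + 1) * ‖y - x‖ ^ 2 * ∫ t in (0 : ℝ)..1, ‖lineMap x y t‖ ^ q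
        = ∫ t in (0 : ℝ)..1, (q + 1) * ‖y - x‖ ^ 2 * ‖lineMap x y t‖ ^ q :=
      (intervalIntegral.integral_const_mul _ _).symm
    _ ≤ ∫ t in (0 : ℝ)..1, deriv g t :=
      intervalIntegral.integral_mono_ae zero_le_one
        ((intervalIntegrable_norm_lineMap_rpow hq hq0 hxy 0 1).const_mul _)
        hmono.intervalIntegrable_deriv (ae_le_deriv_inner_norm_rpow_smul_lineMap hq0 hxy)
    _ ≤ g 1 - g 0 := integral_deriv_le_sub_of_monotoneOn zero_le_one hmono
    _ = ⟪y - x, ‖y‖ ^ q • y - ‖x‖ ^ q • x⟫ := by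
      simp only [hg, lineMap_apply_one, lineMap_apply_zero, inner_sub_right]

end Segment

theorem stmt_13_general {p : ℝ} (hp1 : 1 < p) (hp2 : p ≤ 2) {a b : E} (hab : a ≠ b) :
    (p - 1) * ‖a - b‖ ^ 2 * (∫ l in (0 : ℝ)..1, ‖l • a + (1 - l) • b‖ ^ (p - 2)) ≤
      ⟪a - b, ‖a‖ ^ (p - 2) • a - ‖b‖ ^ (p - 2) • b⟫ := by
  have h := integral_norm_lineMap_rpow_le_inner (q := p - 2) (by linarith) (by linarith) hab.symm
  have hp : p - 2 + 1 = p - 1 := by ring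
  simpa only [lineMap_apply_module, hp, add_comm (_ • b)] using h

end InnerProductSpace

/-- Inequality (nb3b): for `1 < p ≤ 2` and `a ≠ b` in `ℝⁿ`,
`⟪a-b, |a|^(p-2)a - |b|^(p-2)b⟫ ≥ (p-1)|a-b|² ∫₀¹ |λa+(1-λ)b|^(p-2) dλ`. -/
theorem stmt_13 (n : ℕ) (p : ℝ) (hp1 : 1 < p) (hp2 : p ≤ 2)
    (a b : EuclideanSpace ℝ (Fin n)) (hab : a ≠ b) :
    (p - 1) * ‖a - b‖ ^ 2 * (∫ l in (0 : ℝ)..1, ‖l • a + (1 - l) • b‖ ^ (p - 2)) ≤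
      ⟪a - b, ‖a‖ ^ (p - 2) • a - ‖b‖ ^ (p - 2) • b⟫ :=
  stmt_13_general hp1 hp2 hab
end

section
/- Let p ≥ 2 and let a, b ∈ ℝⁿ with |a| > |b| > 0. Then (1/(p−1)) · (|a|^{p−1} + |b|^{p−1})/(|a| + |b|) ≤ ∫₀¹ |λa + (1−λ)b|^{p−2} dλ ≤ (1/(p−1)) · (|a|^{p−1} − |b|^{p−1})/(|a| − |b|). -/
/-! Put `A = |a|` and `B = |b|`. The triangle inequalities place `|λa + (1-λ)b|` between
`|λA - (1-λ)B|` and `λA + (1-λ)B`, its values when `a` and `b` point in opposite directions and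
in the same direction. In both extremal cases the integral over `λ` is the mean of `|x| ^ (p - 2)`
over an interval of the real line, from `-B` to `A` and from `B` to `A` respectively. -/

section RealSegment

variable {q A B : ℝ}

lemma integral_comp_segment {F : Type*} [NormedAddCommGroup F] [NormedSpace ℝ F] (f : ℝ → F)
    (hAB : A ≠ B) :
    ∫ l in (0 : ℝ)..1, f (l * A + (1 - l) * B) = (A - B)⁻¹ • ∫ x in B..A, f x := by
  have hsegment (l : ℝ) : l * A + (1 - l) * B = (A - B) * l + B := by ring
  simp only [hsegment, intervalIntegral.integral_comp_mul_add f (sub_ne_zero.mpr hAB), mul_zero,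
    zero_add, mul_one, sub_add_cancel]

lemma integral_abs_rpow_zero_left (hq : -1 < q) (hA : 0 ≤ A) :
    ∫ x in (0 : ℝ)..A, |x| ^ q = A ^ (q + 1) / (q + 1) := by
  have habs : ∫ x in (0 : ℝ)..A, |x| ^ q = ∫ x in (0 : ℝ)..A, x ^ q := by
    refine intervalIntegral.integral_congr fun x hx => ?_
    rw [Set.uIcc_of_le hA] at hx
    simp only [abs_of_nonneg hx.1]
  rw [habs, integral_rpow (Or.inl hq), Real.zero_rpow (by linarith), sub_zero]

lemma intervalIntegrable_abs_rpow (hq : -1 < q) :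
    IntervalIntegrable (fun x : ℝ => |x| ^ q) MeasureTheory.volume A B := by
  refine intervalIntegrable_of_even (fun x => by rw [abs_neg]) fun x hx => ?_
  refine (intervalIntegral.intervalIntegrable_rpow' hq).congr fun y hy => ?_
  rw [Set.uIoc_of_le hx.le] at hy
  simp only [abs_of_pos hy.1]

lemma integral_abs_rpow_neg_left (hq : -1 < q) (hA : 0 ≤ A) (hB : 0 ≤ B) :
    ∫ x in -B..A, |x| ^ q = (A ^ (q + 1) + B ^ (q + 1)) / (q + 1) := by
  have hreflect : ∫ x in -B..0, |x| ^ q = ∫ x in (0 : ℝ)..B, |x| ^ q := by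
    simpa only [abs_neg, neg_zero] using
      (intervalIntegral.integral_comp_neg (a := 0) (b := B) fun x : ℝ => |x| ^ q).symm
  rw [← intervalIntegral.integral_add_adjacent_intervals (intervalIntegrable_abs_rpow hq)
      (intervalIntegrable_abs_rpow hq), hreflect, integral_abs_rpow_zero_left hq hA,
    integral_abs_rpow_zero_left hq hB]
  ring

end RealSegment

section NormSegment

variable {E : Type*} [SeminormedAddCommGroup E] [NormedSpace ℝ E] {l q : ℝ} (a b : E)

lemma norm_segment_le (hl : l ∈ Set.Icc (0 : ℝ) 1) :
    ‖l • a + (1 - l) • b‖ ≤ l * ‖a‖ + (1 - l) * ‖b‖ := by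
  simpa only [norm_smul_of_nonneg hl.1, norm_smul_of_nonneg (sub_nonneg.mpr hl.2)]
    using norm_add_le (l • a) ((1 - l) • b)

lemma abs_segment_neg_norm_le (hl : l ∈ Set.Icc (0 : ℝ) 1) :
    |l * ‖a‖ + (1 - l) * -‖b‖| ≤ ‖l • a + (1 - l) • b‖ := by
  simpa only [norm_neg, sub_neg_eq_add, norm_smul_of_nonneg hl.1,
    norm_smul_of_nonneg (sub_nonneg.mpr hl.2), mul_neg, ← sub_eq_add_neg]
    using abs_norm_sub_norm_le (l • a) (-((1 - l) • b))

lemma continuous_norm_segment_rpow (hq : 0 ≤ q) :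
    Continuous fun l : ℝ => ‖l • a + (1 - l) • b‖ ^ q :=
  Continuous.rpow_const (by fun_prop) fun _ => Or.inr hq

variable {a b}

lemma integral_norm_segment_rpow_le (hq : 0 ≤ q) (hab : ‖a‖ ≠ ‖b‖) :
    ∫ l in (0 : ℝ)..1, ‖l • a + (1 - l) • b‖ ^ q ≤
      1 / (q + 1) * ((‖a‖ ^ (q + 1) - ‖b‖ ^ (q + 1)) / (‖a‖ - ‖b‖)) := by
  have hcont : Continuous fun l : ℝ => (l * ‖a‖ + (1 - l) * ‖b‖) ^ q :=
    Continuous.rpow_const (by fun_prop) fun _ => Or.inr hq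
  calc ∫ l in (0 : ℝ)..1, ‖l • a + (1 - l) • b‖ ^ q
      ≤ ∫ l in (0 : ℝ)..1, (l * ‖a‖ + (1 - l) * ‖b‖) ^ q :=
        intervalIntegral.integral_mono_on zero_le_one
          ((continuous_norm_segment_rpow a b hq).intervalIntegrable 0 1)
          (hcont.intervalIntegrable 0 1) fun l hl =>
          Real.rpow_le_rpow (norm_nonneg _) (norm_segment_le a b hl) hq
    _ = (‖a‖ - ‖b‖)⁻¹ * ∫ x in ‖b‖..‖a‖, x ^ q := integral_comp_segment (fun x => x ^ q) hab
    _ = 1 / (q + 1) * ((‖a‖ ^ (q + 1) - ‖b‖ ^ (q + 1)) / (‖a‖ - ‖b‖)) := by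
        rw [integral_rpow (Or.inl (by linarith))]
        ring

lemma le_integral_norm_segment_rpow (hq : 0 ≤ q) (hab : 0 < ‖a‖ + ‖b‖) :
    1 / (q + 1) * ((‖a‖ ^ (q + 1) + ‖b‖ ^ (q + 1)) / (‖a‖ + ‖b‖)) ≤
      ∫ l in (0 : ℝ)..1, ‖l • a + (1 - l) • b‖ ^ q := by
  have hcont : Continuous fun l : ℝ => |l * ‖a‖ + (1 - l) * -‖b‖| ^ q :=
    Continuous.rpow_const (by fun_prop) fun _ => Or.inr hq
  calc 1 / (q + 1) * ((‖a‖ ^ (q + 1) + ‖b‖ ^ (q + 1)) / (‖a‖ + ‖b‖))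
      = (‖a‖ - -‖b‖)⁻¹ * ∫ x in -‖b‖..‖a‖, |x| ^ q := by
        rw [integral_abs_rpow_neg_left (by linarith) (norm_nonneg a) (norm_nonneg b)]
        ring
    _ = ∫ l in (0 : ℝ)..1, |l * ‖a‖ + (1 - l) * -‖b‖| ^ q :=
        (integral_comp_segment (fun x => |x| ^ q) (by linarith)).symm
    _ ≤ ∫ l in (0 : ℝ)..1, ‖l • a + (1 - l) • b‖ ^ q :=
        intervalIntegral.integral_mono_on zero_le_one (hcont.intervalIntegrable 0 1)
          ((continuous_norm_segment_rpow a b hq).intervalIntegrable 0 1) fun l hl =>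
          Real.rpow_le_rpow (abs_nonneg _) (abs_segment_neg_norm_le a b hl) hq

theorem stmt_15_general {p : ℝ} (hp : 2 ≤ p) (hab : ‖a‖ ≠ ‖b‖) :
    1 / (p - 1) * ((‖a‖ ^ (p - 1) + ‖b‖ ^ (p - 1)) / (‖a‖ + ‖b‖)) ≤
      (∫ l in (0 : ℝ)..1, ‖l • a + (1 - l) • b‖ ^ (p - 2)) ∧
    (∫ l in (0 : ℝ)..1, ‖l • a + (1 - l) • b‖ ^ (p - 2)) ≤
      1 / (p - 1) * ((‖a‖ ^ (p - 1) - ‖b‖ ^ (p - 1)) / (‖a‖ - ‖b‖)) := by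
  have hq : 0 ≤ p - 2 := sub_nonneg.mpr hp
  have hsum : 0 < ‖a‖ + ‖b‖ := by
    rcases hab.lt_or_gt with h | h <;> linarith [norm_nonneg a, norm_nonneg b]
  rw [show p - 1 = p - 2 + 1 by ring]
  exact ⟨le_integral_norm_segment_rpow hq hsum, integral_norm_segment_rpow_le hq hab⟩

end NormSegment

/-- (eq14) and (eq16): for `p ≥ 2` and `|a| > |b| > 0`,
`(1/(p-1)) (|a|^(p-1)+|b|^(p-1))/(|a|+|b|) ≤ ∫₀¹ |λa+(1-λ)b|^(p-2) dλ
  ≤ (1/(p-1)) (|a|^(p-1)-|b|^(p-1))/(|a|-|b|)`. -/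
theorem stmt_15 (n : ℕ) (p : ℝ) (hp : 2 ≤ p) (a b : EuclideanSpace ℝ (Fin n))
    (hb : 0 < ‖b‖) (hba : ‖b‖ < ‖a‖) :
    1 / (p - 1) * ((‖a‖ ^ (p - 1) + ‖b‖ ^ (p - 1)) / (‖a‖ + ‖b‖)) ≤
      (∫ l in (0 : ℝ)..1, ‖l • a + (1 - l) • b‖ ^ (p - 2)) ∧
    (∫ l in (0 : ℝ)..1, ‖l • a + (1 - l) • b‖ ^ (p - 2)) ≤
      1 / (p - 1) * ((‖a‖ ^ (p - 1) - ‖b‖ ^ (p - 1)) / (‖a‖ - ‖b‖)) :=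
  stmt_15_general hp hba.ne'
end
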